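/- Let A = A₁⊗A₂, B and R be finite-dimensional complex Hilbert spaces and let ψ^{RAB} be a pure state on R⊗A⊗B. Then there exist a unitary operator U on A, a Hilbert space B̃ with d_{B̃} = d_{A₂}, and an isometry V : A₁⊗B → (A⊗B)⊗B̃ such that, after reordering tensor factors, ‖ (I_R⊗V)(I_{RB}⊗U) ψ^{RAB} (I_{RB}⊗U)†(I_R⊗V)† − ψ^{R(AB)} ⊗ Φ^{A₂B̃} ‖₁ ≤ 2[ (2 d_A d_R / d_{A₁}²) ( Tr[(ψ^{AR})²] + 2 Tr[(ψ^A)²] Tr[(ψ^R)²] ) ]^{1/4}, where ψ^{R(AB)} denotes the original pure state ψ^{RAB} regarded as a state on R tensored with the single system A⊗B (a purification of ψ^R). -/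

import Mathlib

open Matrix
open scoped Kronecker ComplexOrder

open scoped MatrixOrder in
/-- Trace norm `‖M‖₁ = Tr √(Mᴴ M)` of a complex square matrix. -/
noncomputable def traceNorm {n : Type*} [Fintype n] [DecidableEq n] (M : Matrix n n ℂ) : ℝ :=
  ((CFC.sqrt (Mᴴ * M)).trace).re

/-- The unit vector `d^{-1/2} ∑ᵢ |i⟩|i⟩` of the maximally entangled state on `X ⊗ X'`
(with `X' ≅ X`). -/
noncomputable def maxEntVec (α : Type*) [Fintype α] [DecidableEq α] : α × α → ℂ :=
  fun p => if p.1 = p.2 then ((Real.sqrt (Fintype.card α) : ℂ))⁻¹ else 0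

/-- The maximally entangled (pure) state `Φ^{XX'}` on `X ⊗ X'`. -/
noncomputable def maxEntState (α : Type*) [Fintype α] [DecidableEq α] :
    Matrix (α × α) (α × α) ℂ :=
  Matrix.vecMulVec (maxEntVec α) (star (maxEntVec α))

/-- The pure state `|v⟩⟨v|` associated to a vector `v`. -/
noncomputable def pureState {ι : Type*} (v : ι → ℂ) : Matrix ι ι ℂ :=
  Matrix.vecMulVec v (star v)

/-- Reduced state `ψ^{AR}` of a pure state on `R ⊗ (A × B)`; the partial trace over `B`. -/
noncomputable def redAR {ιR ιA ιB : Type} [Fintype ιB]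
    (ψ : ιR × (ιA × ιB) → ℂ) : Matrix (ιA × ιR) (ιA × ιR) ℂ :=
  Matrix.of fun i j => ∑ b : ιB, ψ (i.2, (i.1, b)) * star (ψ (j.2, (j.1, b)))

/-- Reduced state `ψ^{A}` of a pure state on `R ⊗ (A × B)`. -/
noncomputable def redA {ιR ιA ιB : Type} [Fintype ιR] [Fintype ιB]
    (ψ : ιR × (ιA × ιB) → ℂ) : Matrix ιA ιA ℂ :=
  Matrix.of fun i j => ∑ r : ιR, ∑ b : ιB, ψ (r, (i, b)) * star (ψ (r, (j, b)))

/-- Reduced state `ψ^{R}` of a pure state on `R ⊗ (A × B)`. -/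
noncomputable def redR {ιR ιA ιB : Type} [Fintype ιA] [Fintype ιB]
    (ψ : ιR × (ιA × ιB) → ℂ) : Matrix ιR ιR ℂ :=
  Matrix.of fun i j => ∑ q : ιA × ιB, ψ (i, q) * star (ψ (j, q))

/-- Purity `Tr[ρ²]` of a state, as a real number. -/
noncomputable def purity {ι : Type*} [Fintype ι] (ρ : Matrix ι ι ℂ) : ℝ :=
  (ρ * ρ).trace.re

/-- The combined isometry of the FQSW protocol: first `I_{RB} ⊗ U` (with `U : A → A₁A₂`),
then `I_{R A₂} ⊗ V` (with `V : A₁ ⊗ B → (A⊗B) ⊗ B̃` and `B̃` a copy of `A₂`), with the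
output tensor factors reordered as `(R × (A × B)) × (A₂ × B̃)`. -/
noncomputable def fqswMap {ιR ιA₁ ιA₂ ιB : Type} [Fintype ιA₁] [DecidableEq ιR]
    (U : Matrix (ιA₁ × ιA₂) (ιA₁ × ιA₂) ℂ)
    (V : Matrix (((ιA₁ × ιA₂) × ιB) × ιA₂) (ιA₁ × ιB) ℂ) :
    Matrix ((ιR × ((ιA₁ × ιA₂) × ιB)) × (ιA₂ × ιA₂)) (ιR × ((ιA₁ × ιA₂) × ιB)) ℂ :=
  Matrix.of fun p q =>
    if p.1.1 = q.1 then
      ∑ a₁ : ιA₁, V (p.1.2, p.2.2) (a₁, q.2.2) * U (a₁, p.2.1) q.2.1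
    else 0


lemma fq_spectral {n : Type*} [Fintype n] [DecidableEq n] {H : Matrix n n ℂ}
    (hH : H.IsHermitian) :
    ∃ W : Matrix n n ℂ, W * Wᴴ = 1 ∧ Wᴴ * W = 1 ∧
      H = W * diagonal (fun i => (hH.eigenvalues i : ℂ)) * Wᴴ := by
  refine ⟨(hH.eigenvectorUnitary : Matrix n n ℂ), ?_, ?_, ?_⟩
  · exact Unitary.coe_mul_star_self hH.eigenvectorUnitary
  · exact Unitary.coe_star_mul_self hH.eigenvectorUnitary
  · conv_lhs => rw [hH.spectral_theorem]
    rw [Unitary.conjStarAlgAut_apply]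
    rfl

lemma fq_trace_sq_eig {n : Type*} [Fintype n] [DecidableEq n] {H : Matrix n n ℂ}
    (hH : H.IsHermitian) :
    (H * H).trace.re = ∑ i, hH.eigenvalues i ^ 2 := by
  obtain ⟨W, h1, h2, h3⟩ := fq_spectral hH
  have : H * H = W * (diagonal (fun i => (hH.eigenvalues i : ℂ)) *
      diagonal (fun i => (hH.eigenvalues i : ℂ))) * Wᴴ := by
    conv_lhs => rw [h3]
    calc _ = W * diagonal (fun i => (hH.eigenvalues i : ℂ)) * (Wᴴ * W) *
      diagonal (fun i => (hH.eigenvalues i : ℂ)) * Wᴴ := by simp only [Matrix.mul_assoc]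
      _ = _ := by rw [h2]; simp only [Matrix.mul_assoc, Matrix.one_mul]
  rw [this, Matrix.trace_mul_comm, ← Matrix.mul_assoc, h2, Matrix.one_mul, diagonal_mul_diagonal,
    trace_diagonal, Complex.re_sum]
  refine Finset.sum_congr rfl fun i _ => ?_
  rw [← Complex.ofReal_mul, Complex.ofReal_re, sq]

open scoped MatrixOrder in
lemma fq_traceNorm_le_rank {n : Type*} [Fintype n] [DecidableEq n] (M : Matrix n n ℂ)
    (k : ℕ) (hk : M.rank ≤ k) :
    traceNorm M ≤ Real.sqrt (k * (Mᴴ * M).trace.re) := by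
  set S := CFC.sqrt (Mᴴ * M) with hS
  have hpos : (0 : Matrix n n ℂ) ≤ Mᴴ * M :=
    Matrix.nonneg_iff_posSemidef.2 (posSemidef_conjTranspose_mul_self M)
  have hSS : S * S = Mᴴ * M := CFC.sqrt_mul_sqrt_self _ hpos
  have hSp : S.PosSemidef := Matrix.nonneg_iff_posSemidef.1 (CFC.sqrt_nonneg _)
  have hSh := hSp.isHermitian
  have hr : S.rank ≤ k := by
    rw [← rank_conjTranspose_mul_self S, hSh.eq, hSS, rank_conjTranspose_mul_self]; exact hk
  apply Real.le_sqrt_of_sq_le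
  have h1 : traceNorm M = ∑ i, hSh.eigenvalues i := by
    unfold traceNorm
    rw [← hS, hSh.trace_eq_sum_eigenvalues, Complex.re_sum]
    rfl
  rw [h1, ← hSS, fq_trace_sq_eig hSh]
  rw [hSh.rank_eq_card_non_zero_eigs, Fintype.card_subtype] at hr
  set s := Finset.univ.filter fun i => hSh.eigenvalues i ≠ 0
  have e1 : ∑ i, hSh.eigenvalues i = ∑ i ∈ s, hSh.eigenvalues i := by
    rw [Finset.sum_filter_ne_zero]
  have e2 : ∑ i ∈ s, hSh.eigenvalues i ^ 2 ≤ ∑ i, hSh.eigenvalues i ^ 2 :=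
    Finset.sum_le_sum_of_subset_of_nonneg (Finset.subset_univ _) fun i _ _ => sq_nonneg _
  rw [e1]
  refine (sq_sum_le_card_mul_sum_sq).trans ?_
  have : (s.card : ℝ) ≤ k := by exact_mod_cast hr
  gcongr

lemma fq_pure_dist {n : Type*} [Fintype n] [DecidableEq n] (u v : n → ℂ)
    (hu : star u ⬝ᵥ u = 1) (hv : star v ⬝ᵥ v = 1) :
    traceNorm (pureState u - pureState v) ≤ 2 * Real.sqrt (1 - ‖star v ⬝ᵥ u‖ ^ 2) := by
  have hr : (pureState u - pureState v).rank ≤ 2 := by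
    have : pureState u - pureState v =
        (Matrix.of fun i (b : Bool) => if b then u i else v i) *
        (Matrix.of fun (b : Bool) j => if b then star (u j) else - star (v j)) := by
      ext i j
      simp [pureState, vecMulVec_apply, Matrix.mul_apply]
      ring
    rw [this]
    refine (rank_mul_le_left _ _).trans ?_
    exact (rank_le_card_width _).trans (by simp)
  refine (fq_traceNorm_le_rank _ 2 hr).trans ?_
  have hc : star u ⬝ᵥ v = star (star v ⬝ᵥ u) := by
    rw [Matrix.star_dotProduct]
  have ht : ((pureState u - pureState v)ᴴ * (pureState u - pureState v)).trace.re
      = 2 * (1 - ‖star v ⬝ᵥ u‖ ^ 2) := by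
    have hh : ∀ w : n → ℂ, (pureState w)ᴴ = pureState w := by
      intro w; ext i j; simp [pureState, vecMulVec_apply, mul_comm]
    have hm : ∀ w x : n → ℂ, (pureState w * pureState x).trace = (star w ⬝ᵥ x) * (star x ⬝ᵥ w) := by
      intro w x
      simp only [pureState, vecMulVec_mul_vecMulVec, trace_vecMulVec]
      simp [dotProduct_comm w]
    rw [conjTranspose_sub, hh, hh, Matrix.sub_mul, Matrix.mul_sub, Matrix.mul_sub, trace_sub,
      trace_sub, trace_sub, hm, hm, hm, hm, hu, hv, hc]
    have : star (star v ⬝ᵥ u) * (star v ⬝ᵥ u) = ((‖star v ⬝ᵥ u‖ ^ 2 : ℝ) : ℂ) := by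
      have := Complex.conj_mul' (star v ⬝ᵥ u)
      simpa using this
    rw [mul_comm (star v ⬝ᵥ u) (star _), this]
    simp only [Complex.sub_re, Complex.ofReal_re, mul_one, Complex.one_re]
    ring
  rw [ht]
  apply le_of_eq
  rw [show ((2:ℕ):ℝ) * (2 * (1 - ‖star v ⬝ᵥ u‖ ^ 2)) = 2 ^ 2 * (1 - ‖star v ⬝ᵥ u‖ ^ 2) by push_cast; ring,
    Real.sqrt_mul (by norm_num), Real.sqrt_sq (by norm_num)]

lemma fq_sqrt {k m : Type*} [Fintype k] [DecidableEq k] [Fintype m] [DecidableEq m]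
    (X : Matrix k m ℂ) :
    ∃ (A : Matrix k k ℂ) (P : Matrix k m ℂ), A.PosSemidef ∧ A * A = X * Xᴴ ∧ X * Pᴴ = A ∧
      (1 - Pᴴ * P).PosSemidef := by
  have hps := posSemidef_self_mul_conjTranspose X
  have hH := hps.isHermitian
  obtain ⟨W, h1, h2, h3⟩ := fq_spectral hH
  set l := hH.eigenvalues with hl
  have hl0 : ∀ i, 0 ≤ l i := hps.eigenvalues_nonneg
  set s : k → ℂ := fun i => (Real.sqrt (l i) : ℂ) with hs
  have hss : ∀ i, s i * s i = (l i : ℂ) := by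
    intro i; simp only [hs]; rw [← Complex.ofReal_mul, Real.mul_self_sqrt (hl0 i)]
  have hstar : ∀ i, star (s i) = s i := by intro i; simp [hs]
  have hmul : ∀ a b : k → ℂ, (W * diagonal a * Wᴴ) * (W * diagonal b * Wᴴ)
      = W * diagonal (fun i => a i * b i) * Wᴴ := by
    intro a b
    calc _ = W * diagonal a * (Wᴴ * W) * diagonal b * Wᴴ := by simp only [Matrix.mul_assoc]
      _ = _ := by rw [h2, Matrix.mul_one, Matrix.mul_assoc W, diagonal_mul_diagonal]
  have hct : ∀ a : k → ℂ, (∀ i, star (a i) = a i) →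
      (W * diagonal a * Wᴴ)ᴴ = W * diagonal a * Wᴴ := by
    intro a ha
    rw [conjTranspose_mul, conjTranspose_mul, conjTranspose_conjTranspose, diagonal_conjTranspose,
      Matrix.mul_assoc]
    congr; ext i; exact ha i
  set T := W * diagonal (fun i => (s i)⁻¹) * Wᴴ with hT
  have hTh : Tᴴ = T := hct _ (by intro i; rw [star_inv₀, hstar])
  refine ⟨W * diagonal s * Wᴴ, T * X, ?_, ?_, ?_, ?_⟩
  · apply PosSemidef.mul_mul_conjTranspose_same
    rw [posSemidef_diagonal_iff]
    intro i
    simp only [hs]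
    exact_mod_cast Real.sqrt_nonneg _
  · rw [hmul]; simp only [hss]; exact h3.symm
  · rw [conjTranspose_mul, hTh, ← Matrix.mul_assoc, h3, hmul]
    congr; ext i
    rw [← hss]
    by_cases h : s i = 0
    · simp [h]
    · field_simp
  · have hid : (T * X)ᴴ * (T * X) * ((T * X)ᴴ * (T * X)) = (T * X)ᴴ * (T * X) := by
      have e : T * (X * Xᴴ) * T * T = T := by
        conv_lhs => rw [h3, hT]
        rw [hmul, hmul, hmul, hT]
        congr; ext i
        rw [← hss]
        by_cases h : s i = 0
        · simp [h]
        · field_simp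
      rw [conjTranspose_mul, hTh]
      calc _ = Xᴴ * T * (T * (X * Xᴴ) * T * T) * X := by simp only [Matrix.mul_assoc]
        _ = _ := by rw [e]; simp only [Matrix.mul_assoc]
    have hsa : ((1 : Matrix m m ℂ) - (T * X)ᴴ * (T * X))ᴴ = 1 - (T * X)ᴴ * (T * X) := by
      rw [conjTranspose_sub, conjTranspose_one, conjTranspose_mul, conjTranspose_conjTranspose]
    have : (1 : Matrix m m ℂ) - (T * X)ᴴ * (T * X) =
        (1 - (T * X)ᴴ * (T * X))ᴴ * (1 - (T * X)ᴴ * (T * X)) := by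
      rw [hsa, Matrix.sub_mul, Matrix.mul_sub, Matrix.mul_sub, hid]
      simp
    rw [this]
    exact posSemidef_conjTranspose_mul_self _

lemma fq_polar {n m : Type*} [Fintype n] [DecidableEq n] [Fintype m] [DecidableEq m]
    (Z : Matrix n m ℂ) (hc : Fintype.card m ≤ Fintype.card n) :
    ∃ (K : Matrix n m ℂ) (S : Matrix m m ℂ), Kᴴ * K = 1 ∧ S.PosSemidef ∧ Z = K * S := by
  have hps := posSemidef_conjTranspose_mul_self Z
  have hH := hps.isHermitian
  obtain ⟨W, h1, h2, h3⟩ := fq_spectral hH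
  set l := hH.eigenvalues with hl
  have hl0 : ∀ i, 0 ≤ l i := hps.eigenvalues_nonneg
  set Y := Z * W with hY
  have hYY : Yᴴ * Y = diagonal (fun i => (l i : ℂ)) := by
    rw [hY, conjTranspose_mul]
    calc _ = Wᴴ * (Zᴴ * Z) * W := by simp only [Matrix.mul_assoc]
      _ = (Wᴴ * W) * diagonal (fun i => (l i : ℂ)) * (Wᴴ * W) := by
        rw [h3]; simp only [Matrix.mul_assoc]
      _ = _ := by rw [h2]; simp
  obtain ⟨e⟩ := Function.Embedding.nonempty_of_card_le hc
  classical
  let g : n → EuclideanSpace ℂ n := fun j =>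
    if h : ∃ i, e i = j then WithLp.toLp 2 (fun x => ((Real.sqrt (l h.choose))⁻¹ : ℂ) * Y x h.choose)
    else 0
  have hg : ∀ i, g (e i) = WithLp.toLp 2 (fun x => ((Real.sqrt (l i))⁻¹ : ℂ) * Y x i) := by
    intro i
    have h : ∃ i', e i' = e i := ⟨i, rfl⟩
    have : h.choose = i := e.injective h.choose_spec
    simp only [g, dif_pos h, this]
  have hin : ∀ i j, ∑ x, star (Y x i) * Y x j = if i = j then (l i : ℂ) else 0 := by
    intro i j
    have := congrFun (congrFun hYY i) j
    rw [Matrix.mul_apply, diagonal_apply] at this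
    simpa [conjTranspose_apply] using this
  let s : Set n := e '' {i | l i ≠ 0}
  have ho : Orthonormal ℂ (s.domRestrict g) := by
    rw [orthonormal_iff_ite]
    rintro ⟨_, i, hi, rfl⟩ ⟨_, j, hj, rfl⟩
    simp only [Set.domRestrict_apply, hg, PiLp.inner_apply, RCLike.inner_apply]
    have : ∑ x, (((Real.sqrt (l j))⁻¹ : ℂ) * Y x j) *
        (starRingEnd ℂ) (((Real.sqrt (l i))⁻¹ : ℂ) * Y x i)
        = ((Real.sqrt (l j))⁻¹ : ℂ) * ((Real.sqrt (l i))⁻¹ : ℂ) * ∑ x, star (Y x i) * Y x j := by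
      rw [Finset.mul_sum]
      refine Finset.sum_congr rfl fun x _ => ?_
      simp
      ring
    rw [this, hin]
    by_cases hij : i = j
    · subst hij
      have h0 : Real.sqrt (l i) ≠ 0 := Real.sqrt_ne_zero'.2 (lt_of_le_of_ne (hl0 i) (Ne.symm hi))
      have : (l i : ℂ) = (Real.sqrt (l i) : ℂ) * (Real.sqrt (l i) : ℂ) := by
        rw [← Complex.ofReal_mul, Real.mul_self_sqrt (hl0 i)]
      have h0' : (Real.sqrt (l i) : ℂ) ≠ 0 := by exact_mod_cast h0
      simp only [if_true]
      rw [this]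
      field_simp
    · have : (⟨e i, i, hi, rfl⟩ : s) ≠ ⟨e j, j, hj, rfl⟩ := by
        intro h; exact hij (e.injective (Subtype.ext_iff.1 h))
      rw [if_neg hij, if_neg this, mul_zero]
  obtain ⟨b, hb⟩ := ho.exists_orthonormalBasis_extension_of_card_eq (by simp)
  let K : Matrix n m ℂ := Matrix.of fun x i => b (e i) x
  have hKK : Kᴴ * K = 1 := by
    ext i j
    have := (orthonormal_iff_ite.1 b.orthonormal) (e i) (e j)
    rw [PiLp.inner_apply] at this
    simp only [RCLike.inner_apply] at this
    rw [Matrix.mul_apply, Matrix.one_apply]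
    simp only [conjTranspose_apply, K, Matrix.of_apply]
    simp only [e.injective.eq_iff] at this
    rw [← this]
    refine Finset.sum_congr rfl fun x _ => ?_
    rw [mul_comm]; rfl
  have hYK : Y = K * diagonal (fun i => (Real.sqrt (l i) : ℂ)) := by
    ext x i
    rw [mul_diagonal]
    by_cases hi : l i = 0
    · have h0 := hin i i
      simp only [hi, if_true, Complex.ofReal_zero] at h0
      have h1 : ∑ x, ‖Y x i‖ ^ 2 = 0 := by
        have : ((∑ x, ‖Y x i‖ ^ 2 : ℝ) : ℂ) = 0 := by
          rw [← h0]; push_cast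
          refine Finset.sum_congr rfl fun x _ => ?_
          exact (Complex.conj_mul' _).symm
        exact_mod_cast this
      have := (Finset.sum_eq_zero_iff_of_nonneg (fun x _ => sq_nonneg _)).1 h1 x (Finset.mem_univ _)
      have : Y x i = 0 := by simpa using this
      simp [this, hi]
    · have : b (e i) = g (e i) := hb _ ⟨i, hi, rfl⟩
      have h0 : Real.sqrt (l i) ≠ 0 := Real.sqrt_ne_zero'.2 (lt_of_le_of_ne (hl0 i) (Ne.symm hi))
      have h0' : (Real.sqrt (l i) : ℂ) ≠ 0 := by exact_mod_cast h0
      simp only [K, Matrix.of_apply, this, hg]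
      field_simp
  refine ⟨K * Wᴴ, W * diagonal (fun i => (Real.sqrt (l i) : ℂ)) * Wᴴ, ?_, ?_, ?_⟩
  · rw [conjTranspose_mul, conjTranspose_conjTranspose]
    calc _ = W * (Kᴴ * K) * Wᴴ := by simp only [Matrix.mul_assoc]
      _ = 1 := by rw [hKK, Matrix.mul_one, h1]
  · apply PosSemidef.mul_mul_conjTranspose_same
    rw [posSemidef_diagonal_iff]
    intro i
    exact_mod_cast Real.sqrt_nonneg _
  · calc Z = Z * (W * Wᴴ) := by rw [h1, Matrix.mul_one]
      _ = Y * Wᴴ := by rw [hY, Matrix.mul_assoc]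
      _ = K * (Wᴴ * W) * diagonal (fun i => (Real.sqrt (l i) : ℂ)) * Wᴴ := by
        rw [h2, Matrix.mul_one, hYK]
      _ = _ := by simp only [Matrix.mul_assoc]

open scoped MatrixOrder in
lemma fq_psd_factor {n : Type*} [Fintype n] [DecidableEq n] {S : Matrix n n ℂ}
    (hS : S.PosSemidef) : ∃ R : Matrix n n ℂ, S = Rᴴ * R :=
  CStarAlgebra.nonneg_iff_eq_star_mul_self.mp hS.nonneg

lemma fq_re_trace_nonneg {n : Type*} [Fintype n] {A : Matrix n n ℂ} (hA : A.PosSemidef) :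
    0 ≤ A.trace.re := (Complex.le_def.1 hA.trace_nonneg).1

lemma fq_amgm {k n : Type*} [Fintype k] [Fintype n] (C D : Matrix k n ℂ) :
    2 * (Cᴴ * D).trace.re ≤ (Cᴴ * C).trace.re + (Dᴴ * D).trace.re := by
  have h := fq_re_trace_nonneg (posSemidef_conjTranspose_mul_self (C - D))
  have e : (Dᴴ * C).trace = star (Cᴴ * D).trace := by
    rw [← trace_conjTranspose, conjTranspose_mul, conjTranspose_conjTranspose]
  rw [conjTranspose_sub, Matrix.sub_mul, Matrix.mul_sub, Matrix.mul_sub, trace_sub, trace_sub,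
    trace_sub, e] at h
  simp only [Complex.sub_re, Complex.star_def, Complex.conj_re] at h
  linarith

lemma fq_contr {k m l : Type*} [Fintype k] [Fintype m] [DecidableEq m] [Fintype l]
    (P : Matrix k m ℂ) (hP : (1 - Pᴴ * P).PosSemidef) (R : Matrix m l ℂ) :
    ((P * R)ᴴ * (P * R)).trace.re ≤ (Rᴴ * R).trace.re := by
  have h := fq_re_trace_nonneg (hP.conjTranspose_mul_mul_same R)
  rw [Matrix.mul_sub, Matrix.sub_mul, trace_sub, Matrix.mul_one, Complex.sub_re] at h
  have e : Rᴴ * (Pᴴ * P) * R = (P * R)ᴴ * (P * R) := by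
    rw [conjTranspose_mul]; simp only [Matrix.mul_assoc]
  rw [e] at h
  linarith

lemma fq_powers {k : Type*} [Fintype k] [DecidableEq k] (A B : Matrix k k ℂ)
    (hA : A.PosSemidef) (hB : B.PosSemidef) :
    ((A - B) * (A - B)).trace.re ≤
      Real.sqrt (Fintype.card k * ((A * A - B * B) * (A * A - B * B)).trace.re) := by
  have hH : (A - B).IsHermitian := hA.isHermitian.sub hB.isHermitian
  obtain ⟨W, h1, h2, h3⟩ := fq_spectral hH
  rw [fq_trace_sq_eig hH]
  set μ := hH.eigenvalues with hμ
  -- conjugated matrices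
  set A' := Wᴴ * A * W with hA'
  set B' := Wᴴ * B * W with hB'
  have pA : A'.PosSemidef := hA.conjTranspose_mul_mul_same W
  have pB : B'.PosSemidef := hB.conjTranspose_mul_mul_same W
  have hd : A' - B' = diagonal (fun i => (μ i : ℂ)) := by
    rw [hA', hB', ← Matrix.sub_mul, ← Matrix.mul_sub, h3]
    calc _ = (Wᴴ * W) * diagonal (fun i => (μ i : ℂ)) * (Wᴴ * W) := by
          simp only [Matrix.mul_assoc]
      _ = _ := by rw [h2]; simp
  have hconj : ∀ M N : Matrix k k ℂ, (Wᴴ * M * W) * (Wᴴ * N * W) = Wᴴ * (M * N) * W := by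
    intro M N
    calc _ = Wᴴ * M * (W * Wᴴ) * N * W := by simp only [Matrix.mul_assoc]
      _ = _ := by rw [h1]; simp only [Matrix.mul_assoc, Matrix.one_mul]
  set D := A' * A' - B' * B' with hD
  have hDD : ((A * A - B * B) * (A * A - B * B)).trace = (D * D).trace := by
    have : D = Wᴴ * (A * A - B * B) * W := by
      rw [hD, hA', hB', hconj, hconj, Matrix.mul_sub, Matrix.sub_mul]
    rw [this, hconj, Matrix.mul_assoc, Matrix.trace_mul_comm Wᴴ, Matrix.mul_assoc, h1, Matrix.mul_one]
  have hDh : D.IsHermitian := by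
    rw [hD]
    apply IsHermitian.sub
    · rw [IsHermitian, conjTranspose_mul, pA.isHermitian.eq]
    · rw [IsHermitian, conjTranspose_mul, pB.isHermitian.eq]
  -- diagonal entries of D
  have hDi : ∀ i, D i i = (μ i : ℂ) * (A' i i + B' i i) := by
    intro i
    have e2 : (2 : ℂ) • D = (A' - B') * (A' + B') + (A' + B') * (A' - B') := by
      rw [hD, two_smul]; noncomm_ring
    have := congrFun (congrFun e2 i) i
    rw [hd] at this
    simp only [Matrix.smul_apply, Matrix.add_apply, diagonal_mul, mul_diagonal, smul_eq_mul] at this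
    linear_combination this / 2
  have hle : ∀ i, μ i ^ 2 ≤ ‖D i i‖ := by
    intro i
    obtain ⟨ha1, ha2⟩ := Complex.le_def.1 (pA.diag_nonneg (i := i))
    obtain ⟨hb1, hb2⟩ := Complex.le_def.1 (pB.diag_nonneg (i := i))
    have hdi : (A' i i).re - (B' i i).re = μ i := by
      have := congrFun (congrFun hd i) i
      rw [Matrix.sub_apply, diagonal_apply_eq] at this
      have := congrArg Complex.re this
      simpa using this
    have hs : |μ i| ≤ (A' i i).re + (B' i i).re := by
      rw [abs_le]
      simp only [Complex.zero_re] at ha1 hb1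
      constructor <;> linarith
    rw [hDi, norm_mul, Complex.norm_real, Real.norm_eq_abs]
    calc μ i ^ 2 = |μ i| * |μ i| := by rw [← sq, sq_abs]
      _ ≤ |μ i| * ((A' i i).re + (B' i i).re) := by gcongr
      _ ≤ |μ i| * ‖A' i i + B' i i‖ := by
        gcongr
        rw [← Complex.add_re]
        exact Complex.re_le_norm _
  have hfro : ∑ i, ‖D i i‖ ^ 2 ≤ (D * D).trace.re := by
    have : (D * D).trace.re = ∑ i, ∑ j, ‖D i j‖ ^ 2 := by
      rw [Matrix.trace, Complex.re_sum]
      refine Finset.sum_congr rfl fun i _ => ?_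
      rw [diag_apply, Matrix.mul_apply, Complex.re_sum]
      refine Finset.sum_congr rfl fun j _ => ?_
      rw [← hDh.apply j i, Complex.star_def, Complex.mul_conj']
      norm_cast
    rw [this]
    refine Finset.sum_le_sum fun i _ => ?_
    exact Finset.single_le_sum (f := fun j => ‖D i j‖ ^ 2) (fun j _ => sq_nonneg _) (Finset.mem_univ i)
  rw [hDD]
  apply Real.le_sqrt_of_sq_le
  have h4 : ∑ i, μ i ^ 2 ≤ ∑ i, ‖D i i‖ := Finset.sum_le_sum fun i _ => hle i
  have h5 : 0 ≤ ∑ i, μ i ^ 2 := Finset.sum_nonneg fun i _ => sq_nonneg _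
  calc (∑ i, μ i ^ 2) ^ 2 ≤ (∑ i, ‖D i i‖) ^ 2 := by gcongr
    _ ≤ (Finset.univ : Finset k).card * ∑ i, ‖D i i‖ ^ 2 := sq_sum_le_card_mul_sum_sq
    _ ≤ _ := by
      rw [Finset.card_univ]; gcongr

lemma fq_uhlmann {k m n : Type*} [Fintype k] [DecidableEq k] [Fintype m] [DecidableEq m]
    [Fintype n] [DecidableEq n] (X : Matrix k m ℂ) (Y : Matrix k n ℂ)
    (hc : Fintype.card m ≤ Fintype.card n)
    (hX : (X * Xᴴ).trace = 1) (hY : (Y * Yᴴ).trace = 1) :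
    ∃ W : Matrix m n ℂ, W * Wᴴ = 1 ∧
      1 - Real.sqrt (Fintype.card k *
        ((X * Xᴴ - Y * Yᴴ) * (X * Xᴴ - Y * Yᴴ)).trace.re) / 2 ≤ (Yᴴ * X * W).trace.re := by
  obtain ⟨A, P, pA, hAA, hXP, hP⟩ := fq_sqrt X
  obtain ⟨B, Q, pB, hBB, hYQ, hQ⟩ := fq_sqrt Y
  obtain ⟨K, S, hK, hS, hZ⟩ := fq_polar (Yᴴ * X) hc
  refine ⟨Kᴴ, by rw [conjTranspose_conjTranspose, hK], ?_⟩
  have h1 : (Yᴴ * X * Kᴴ).trace = S.trace := by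
    rw [hZ, Matrix.trace_mul_comm, ← Matrix.mul_assoc, hK, Matrix.one_mul]
  have h2 : (Yᴴ * X * (Pᴴ * Q)).trace = (A * B).trace := by
    calc _ = (Yᴴ * (X * Pᴴ * Q)).trace := by simp only [Matrix.mul_assoc]
      _ = (A * (Q * Yᴴ)).trace := by rw [hXP, Matrix.trace_mul_comm, Matrix.mul_assoc]
      _ = (A * (Y * Qᴴ)ᴴ).trace := by rw [conjTranspose_mul, conjTranspose_conjTranspose]
      _ = _ := by rw [hYQ, pB.isHermitian.eq]
  have h3 : (Yᴴ * X * (Pᴴ * Q)).trace.re ≤ S.trace.re := by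
    obtain ⟨R, hR⟩ := fq_psd_factor hS
    have e1 : (Yᴴ * X * (Pᴴ * Q)).trace = ((P * Rᴴ)ᴴ * (Q * (K * Rᴴ))).trace := by
      rw [hZ, hR, conjTranspose_mul, conjTranspose_conjTranspose]
      calc (K * (Rᴴ * R) * (Pᴴ * Q)).trace = ((K * Rᴴ) * (R * Pᴴ * Q)).trace := by
            simp only [Matrix.mul_assoc]
        _ = _ := by rw [Matrix.trace_mul_comm]; simp only [Matrix.mul_assoc]
    have e2 : ((K * Rᴴ)ᴴ * (K * Rᴴ)).trace = S.trace := by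
      rw [hR, conjTranspose_mul, conjTranspose_conjTranspose]
      calc _ = (R * (Kᴴ * K) * Rᴴ).trace := by simp only [Matrix.mul_assoc]
        _ = _ := by rw [hK, Matrix.mul_one, Matrix.trace_mul_comm]
    have e3 : (Rᴴᴴ * Rᴴ).trace = S.trace := by
      rw [hR, conjTranspose_conjTranspose, Matrix.trace_mul_comm]
    have a1 := fq_amgm (P * Rᴴ) (Q * (K * Rᴴ))
    have a2 := fq_contr P hP Rᴴ
    have a3 := fq_contr Q hQ (K * Rᴴ)
    rw [e2] at a3
    rw [e3] at a2
    rw [e1]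
    linarith
  have h4 := fq_powers A B pA pB
  rw [hAA, hBB] at h4
  have h5 : ((A - B) * (A - B)).trace.re = 2 - 2 * (A * B).trace.re := by
    rw [Matrix.sub_mul, Matrix.mul_sub, Matrix.mul_sub, trace_sub, trace_sub, trace_sub, hAA, hBB,
      hX, hY, Matrix.trace_mul_comm B A]
    simp only [Complex.sub_re, Complex.one_re]
    ring
  rw [h1]
  rw [h2] at h3
  linarith

lemma fq_sum4 {ι : Type*} [Fintype ι] (f g h m : ι → ℂ) :
    (∑ i, f i) * (∑ i, g i) * (∑ i, h i) * (∑ i, m i)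
      = ∑ i, ∑ j, ∑ k, ∑ l, f i * g j * h k * m l := by
  simp only [← Finset.mul_sum, ← Finset.sum_mul]

/-- Action of an operator on the `A` factor. -/
noncomputable def fqAct {ιR ι ιB : Type} [Fintype ι] (U : Matrix ι ι ℂ)
    (ψ : ιR × (ι × ιB) → ℂ) : ιR × (ι × ιB) → ℂ :=
  fun p => ∑ a, U p.2.1 a * ψ (p.1, (a, p.2.2))

/-- The four-index tensor controlling all second moments. -/
noncomputable def fqG {ιR ι ιB : Type} [Fintype ιR] [Fintype ιB]
    (ψ : ιR × (ι × ιB) → ℂ) (i j k l : ι) : ℂ :=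
  ∑ r : ιR, ∑ s : ιR, ∑ b : ιB, ∑ c : ιB,
    ψ (r, (i, b)) * ψ (s, (j, c)) * star (ψ (s, (k, b))) * star (ψ (r, (l, c)))

lemma fqAct_mul {ιR ι ιB : Type} [Fintype ι] (U W : Matrix ι ι ℂ)
    (ψ : ιR × (ι × ιB) → ℂ) : fqAct (U * W) ψ = fqAct U (fqAct W ψ) := by
  funext p
  simp only [fqAct, Matrix.mul_apply, Finset.sum_mul, Finset.mul_sum]
  rw [Finset.sum_comm]
  refine Finset.sum_congr rfl fun a _ => Finset.sum_congr rfl fun b _ => ?_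
  ring

lemma fqG_act {ιR ι ιB : Type} [Fintype ιR] [Fintype ι] [Fintype ιB] (U : Matrix ι ι ℂ)
    (ψ : ιR × (ι × ιB) → ℂ) (i j k l : ι) :
    fqG (fqAct U ψ) i j k l = ∑ i', ∑ j', ∑ k', ∑ l',
      U i i' * U j j' * star (U k k') * star (U l l') * fqG ψ i' j' k' l' := by
  have e1 : ∀ r s b c, fqAct U ψ (r, (i, b)) * fqAct U ψ (s, (j, c)) *
      star (fqAct U ψ (s, (k, b))) * star (fqAct U ψ (r, (l, c))) =
      ∑ q : ι × ι × ι × ι, U i q.1 * U j q.2.1 * star (U k q.2.2.1) * star (U l q.2.2.2) *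
      (ψ (r, (q.1, b)) * ψ (s, (q.2.1, c)) * star (ψ (s, (q.2.2.1, b))) *
        star (ψ (r, (q.2.2.2, c)))) := by
    intro r s b c
    simp only [fqAct, Fintype.sum_prod_type, star_sum]
    rw [fq_sum4]
    refine Finset.sum_congr rfl fun a _ => Finset.sum_congr rfl fun b _ =>
      Finset.sum_congr rfl fun a _ => Finset.sum_congr rfl fun b _ => ?_
    simp only [star_mul']
    ring
  have e2 : ∀ F : ι → ι → ι → ι → ℂ, ∑ i', ∑ j', ∑ k', ∑ l', F i' j' k' l'
      = ∑ q : ι × ι × ι × ι, F q.1 q.2.1 q.2.2.1 q.2.2.2 := by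
    intro F; simp only [Fintype.sum_prod_type]
  rw [e2]
  unfold fqG
  simp only [e1, Finset.mul_sum]
  have e3 : ∀ F : ιR → ιR → ιB → ιB → (ι × ι × ι × ι) → ℂ,
      ∑ r, ∑ s, ∑ b, ∑ c, ∑ q, F r s b c q = ∑ q, ∑ r, ∑ s, ∑ b, ∑ c, F r s b c q := by
    intro F
    have t1 : ∀ r s b, ∑ c, ∑ q, F r s b c q = ∑ q, ∑ c, F r s b c q :=
      fun r s b => Finset.sum_comm
    simp only [t1]
    have t2 : ∀ r s, ∑ b, ∑ q, ∑ c, F r s b c q = ∑ q, ∑ b, ∑ c, F r s b c q :=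
      fun r s => Finset.sum_comm
    simp only [t2]
    have t3 : ∀ r, ∑ s, ∑ q, ∑ b, ∑ c, F r s b c q = ∑ q, ∑ s, ∑ b, ∑ c, F r s b c q :=
      fun r => Finset.sum_comm
    simp only [t3]
    exact Finset.sum_comm
  rw [e3]

lemma fq_purityR {ιR ι ιB : Type} [Fintype ιR] [Fintype ι] [Fintype ιB]
    (ψ : ιR × (ι × ιB) → ℂ) :
    purity (redR ψ) = (∑ i, ∑ j, fqG ψ i j i j).re := by
  unfold purity
  congr 1
  simp only [Matrix.trace, Matrix.diag_apply, Matrix.mul_apply, redR, Matrix.of_apply,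
    Fintype.sum_prod_type, fqG, Finset.sum_mul_sum]
  have t : ∀ F : ι → ι → ιR → ιR → ιB → ιB → ℂ,
    ∑ i, ∑ j, ∑ r, ∑ s, ∑ b, ∑ c, F i j r s b c = ∑ r, ∑ s, ∑ i, ∑ j, ∑ b, ∑ c, F i j r s b c := by
    intro F
    have a1 : ∀ i, ∑ j, ∑ r, ∑ s, ∑ b, ∑ c, F i j r s b c = ∑ r, ∑ j, ∑ s, ∑ b, ∑ c, F i j r s b c :=
      fun i => Finset.sum_comm
    simp only [a1]
    rw [Finset.sum_comm]
    refine Finset.sum_congr rfl fun r _ => ?_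
    have a2 : ∀ i, ∑ j, ∑ s, ∑ b, ∑ c, F i j r s b c = ∑ s, ∑ j, ∑ b, ∑ c, F i j r s b c :=
      fun i => Finset.sum_comm
    simp only [a2]
    rw [Finset.sum_comm]
  rw [t]
  refine Finset.sum_congr rfl fun r _ => Finset.sum_congr rfl fun s _ =>
    Finset.sum_congr rfl fun i _ => Finset.sum_congr rfl fun j _ =>
    Finset.sum_congr rfl fun b _ => Finset.sum_congr rfl fun c _ => ?_
  ring

lemma fq_purityAR {ιR ι ιB : Type} [Fintype ιR] [Fintype ι] [Fintype ιB]
    (ψ : ιR × (ι × ιB) → ℂ) :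
    purity (redAR ψ) = (∑ i, ∑ j, fqG ψ i j j i).re := by
  unfold purity
  congr 1
  simp only [Matrix.trace, Matrix.diag_apply, Matrix.mul_apply, redAR, Matrix.of_apply,
    Fintype.sum_prod_type, fqG, Finset.sum_mul_sum]
  refine Finset.sum_congr rfl fun i _ => ?_
  rw [Finset.sum_comm]
  refine Finset.sum_congr rfl fun j _ => Finset.sum_congr rfl fun r _ =>
    Finset.sum_congr rfl fun s _ => Finset.sum_congr rfl fun b _ =>
    Finset.sum_congr rfl fun c _ => ?_
  ring

lemma fq_redR_act {ιR ι ιB : Type} [Fintype ιR] [Fintype ι] [DecidableEq ι] [Fintype ιB]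
    (U : Matrix ι ι ℂ) (hU : U ∈ Matrix.unitaryGroup ι ℂ)
    (ψ : ιR × (ι × ιB) → ℂ) : redR (fqAct U ψ) = redR ψ := by
  have hUU : Uᴴ * U = 1 := Matrix.mem_unitaryGroup_iff'.1 hU
  ext r s
  simp only [redR, Matrix.of_apply, fqAct, Fintype.sum_prod_type]
  rw [Finset.sum_comm]
  conv_rhs => rw [Finset.sum_comm]
  refine Finset.sum_congr rfl fun b _ => ?_
  have : ∀ x, (∑ a, U x a * ψ (r, (a, b))) * star (∑ a, U x a * ψ (s, (a, b))) =
      ∑ a, ∑ a', (star (U x a') * U x a) * (ψ (r, (a, b)) * star (ψ (s, (a', b)))) := by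
    intro x
    simp only [star_sum, Finset.sum_mul_sum, star_mul']
    refine Finset.sum_congr rfl fun a _ => Finset.sum_congr rfl fun a' _ => ?_
    ring
  simp only [this]
  rw [Finset.sum_comm]
  refine Finset.sum_congr rfl fun a _ => ?_
  rw [Finset.sum_comm]
  have h2 : ∀ a', ∑ x, star (U x a') * U x a = if a' = a then 1 else 0 := by
    intro a'
    have := congrFun (congrFun hUU a') a
    rwa [Matrix.mul_apply, Matrix.one_apply] at this
  simp only [← Finset.sum_mul, h2]
  simp

lemma fq_redAR_act {ιR ι ιB : Type} [Fintype ιR] [Fintype ι] [DecidableEq ι] [Fintype ιB]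
    [DecidableEq ιR]
    (U : Matrix ι ι ℂ) (hU : U ∈ Matrix.unitaryGroup ι ℂ)
    (ψ : ιR × (ι × ιB) → ℂ) : purity (redAR (fqAct U ψ)) = purity (redAR ψ) := by
  have hUU : Uᴴ * U = 1 := Matrix.mem_unitaryGroup_iff'.1 hU
  set K : Matrix (ι × ιR) (ι × ιR) ℂ := U ⊗ₖ (1 : Matrix ιR ιR ℂ) with hK
  have hKK : Kᴴ * K = 1 := by
    rw [hK, conjTranspose_kronecker, ← mul_kronecker_mul, hUU]; simp
  have : redAR (fqAct U ψ) = K * redAR ψ * Kᴴ := by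
    ext ⟨i, r⟩ ⟨j, s⟩
    simp only [Matrix.mul_apply, hK, conjTranspose_apply, kronecker_apply, Fintype.sum_prod_type,
      Matrix.one_apply, redAR, Matrix.of_apply, fqAct]
    simp only [mul_ite, mul_one, mul_zero, ite_mul, zero_mul, Finset.sum_ite_eq, Finset.mem_univ,
      if_true, star_zero, apply_ite star]
    simp only [star_sum, Finset.sum_mul, Finset.mul_sum, star_mul']
    rw [Finset.sum_comm]
    conv_lhs => enter [2, x]; rw [Finset.sum_comm]
    refine Finset.sum_congr rfl fun a _ => Finset.sum_congr rfl fun b _ =>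
      Finset.sum_congr rfl fun c _ => ?_
    ring
  unfold purity
  rw [this]
  congr 1
  calc (K * redAR ψ * Kᴴ * (K * redAR ψ * Kᴴ)).trace
      = (K * (redAR ψ * (Kᴴ * K) * redAR ψ * Kᴴ)).trace := by simp only [Matrix.mul_assoc]
    _ = _ := by
      rw [hKK, Matrix.trace_mul_comm, Matrix.mul_one, Matrix.mul_assoc, hKK, Matrix.mul_one]

lemma fqG_diag_nonneg {ιR ι ιB : Type} [Fintype ιR] [Fintype ιB]
    (ψ : ιR × (ι × ιB) → ℂ) (i : ι) : 0 ≤ (fqG ψ i i i i).re := by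
  have : fqG ψ i i i i = ∑ r : ιR, ∑ s : ιR,
      ((‖∑ b, ψ (r, (i, b)) * star (ψ (s, (i, b)))‖ ^ 2 : ℝ) : ℂ) := by
    unfold fqG
    refine Finset.sum_congr rfl fun r _ => Finset.sum_congr rfl fun s _ => ?_
    rw [Complex.ofReal_pow, ← Complex.mul_conj', ← Complex.star_def, star_sum, Finset.sum_mul_sum]
    refine Finset.sum_congr rfl fun b _ => Finset.sum_congr rfl fun c _ => ?_
    simp only [star_mul', star_star]
    ring
  rw [this]
  simp only [← Complex.ofReal_sum, Complex.ofReal_re]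
  positivity

/-- Indicator of `{i, j} = {k, l}` (as multisets). -/
noncomputable def fqInd {ι : Type*} [DecidableEq ι] (i j k l : ι) : ℂ :=
  (if i = k ∧ j = l then 1 else 0) + (if i = l ∧ j = k then 1 else 0)
    - (if i = j ∧ i = k ∧ i = l then 1 else 0)

/-- A vector of cube-root-of-unity phases. -/
noncomputable def fqPh {ι : Type*} (θ : ι → ZMod 3) (i : ι) : ℂ := ZMod.stdAddChar (θ i)

lemma fqPh_star {ι : Type*} (θ : ι → ZMod 3) (i : ι) :
    star (fqPh θ i) = ZMod.stdAddChar (-θ i) := by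
  rw [AddChar.map_neg_eq_conj]; rfl

lemma fqPh_mul_star {ι : Type*} (θ : ι → ZMod 3) (i : ι) :
    fqPh θ i * star (fqPh θ i) = 1 := by
  rw [fqPh_star, fqPh, ← AddChar.map_add_eq_mul, add_neg_cancel, AddChar.map_zero_eq_one]

lemma fq_phase_avg {ι : Type*} [Fintype ι] [DecidableEq ι] (i j k l : ι) :
    ∑ θ : ι → ZMod 3, fqPh θ i * fqPh θ j * star (fqPh θ k) * star (fqPh θ l)
      = (Fintype.card (ι → ZMod 3) : ℂ) * fqInd i j k l := by
  have e : ∀ θ : ι → ZMod 3, fqPh θ i * fqPh θ j * star (fqPh θ k) * star (fqPh θ l)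
      = ZMod.stdAddChar (θ i + θ j - θ k - θ l) := by
    intro θ
    rw [fqPh_star, fqPh_star, fqPh, fqPh, sub_eq_add_neg, sub_eq_add_neg,
      AddChar.map_add_eq_mul, AddChar.map_add_eq_mul, AddChar.map_add_eq_mul]
  simp only [e]
  by_cases hm : (i = k ∧ j = l) ∨ (i = l ∧ j = k)
  · have h0 : ∀ θ : ι → ZMod 3, θ i + θ j - θ k - θ l = 0 := by
      intro θ
      rcases hm with ⟨rfl, rfl⟩ | ⟨rfl, rfl⟩ <;> ring
    have h1 : fqInd i j k l = 1 := by
      unfold fqInd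
      rcases hm with ⟨rfl, rfl⟩ | ⟨rfl, rfl⟩
      · by_cases h : i = j
        · subst h; simp
        · simp [h]
      · by_cases h : i = j
        · subst h; simp
        · simp [h]
    simp [h0, h1]
  · have h1 : fqInd i j k l = 0 := by
      unfold fqInd
      push Not at hm
      have a : ¬ (i = k ∧ j = l) := fun h => hm.1 h.1 h.2
      have b : ¬ (i = l ∧ j = k) := fun h => hm.2 h.1 h.2
      have c : ¬ (i = j ∧ i = k ∧ i = l) := by
        rintro ⟨rfl, rfl, rfl⟩; exact a ⟨rfl, rfl⟩
      simp [a, b, c]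
    rw [h1, mul_zero]
    -- find a direction in which the exponent moves
    have hs : ∃ v : ι → ZMod 3, v i + v j - v k - v l ≠ 0 := by
      by_cases hik : i = k
      · subst hik
        have hjl : j ≠ l := fun h => hm (Or.inl ⟨rfl, h⟩)
        refine ⟨Pi.single j 1, ?_⟩
        have : (Pi.single j 1 : ι → ZMod 3) l = 0 := Pi.single_eq_of_ne (Ne.symm hjl) 1
        rw [this, Pi.single_eq_same]
        ring_nf
        decide
      · by_cases hil : i = l
        · subst hil
          have hjk : j ≠ k := fun h => hm (Or.inr ⟨rfl, h⟩)
          refine ⟨Pi.single j 1, ?_⟩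
          have : (Pi.single j 1 : ι → ZMod 3) k = 0 := Pi.single_eq_of_ne (Ne.symm hjk) 1
          rw [this, Pi.single_eq_same]
          ring_nf
          decide
        · refine ⟨Pi.single i 1, ?_⟩
          have h1 : (Pi.single i 1 : ι → ZMod 3) k = 0 := Pi.single_eq_of_ne (Ne.symm hik) 1
          have h2 : (Pi.single i 1 : ι → ZMod 3) l = 0 := Pi.single_eq_of_ne (Ne.symm hil) 1
          rw [h1, h2, Pi.single_eq_same]
          by_cases hij : j = i
          · subst hij; rw [Pi.single_eq_same]; decide
          · rw [Pi.single_eq_of_ne hij]; decide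
    obtain ⟨v, hv⟩ := hs
    set T := ∑ θ : ι → ZMod 3, (ZMod.stdAddChar (θ i + θ j - θ k - θ l) : ℂ) with hT
    have hshift : T = ZMod.stdAddChar (v i + v j - v k - v l) * T := by
      conv_lhs => rw [hT, ← Equiv.sum_comp (Equiv.addRight v)]
      rw [hT, Finset.mul_sum]
      refine Finset.sum_congr rfl fun θ _ => ?_
      rw [← AddChar.map_add_eq_mul]
      congr 1
      simp only [Equiv.coe_addRight, Pi.add_apply]
      ring
    have hne : (ZMod.stdAddChar (v i + v j - v k - v l) : ℂ) ≠ 1 := by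
      intro h
      apply hv
      apply ZMod.injective_stdAddChar
      rw [h, AddChar.map_zero_eq_one]
    have : (1 - (ZMod.stdAddChar (v i + v j - v k - v l) : ℂ)) * T = 0 := by
      linear_combination hshift
    rcases mul_eq_zero.1 this with h | h
    · exact absurd (sub_eq_zero.1 h).symm hne
    · exact h

lemma fq_flat {ι : Type*} [Fintype ι] [DecidableEq ι] [Nonempty ι] :
    ∃ F : Matrix ι ι ℂ, F ∈ Matrix.unitaryGroup ι ℂ ∧
      ∀ i j, F i j * star (F i j) = (Fintype.card ι : ℂ)⁻¹ := by
  set d := Fintype.card ι with hd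
  have : NeZero d := ⟨Fintype.card_ne_zero⟩
  have e : ι ≃ ZMod d := Fintype.equivOfCardEq (by rw [ZMod.card])
  have hd0 : (d : ℂ) ≠ 0 := by exact_mod_cast NeZero.ne d
  have hsq : ((Real.sqrt d : ℂ))⁻¹ * ((Real.sqrt d : ℂ))⁻¹ = (d : ℂ)⁻¹ := by
    rw [← mul_inv, ← Complex.ofReal_mul, Real.mul_self_sqrt (Nat.cast_nonneg _)]; simp
  have hst : star ((Real.sqrt d : ℂ))⁻¹ = ((Real.sqrt d : ℂ))⁻¹ := by simp
  have hch : ∀ x : ZMod d, star (ZMod.stdAddChar x : ℂ) = ZMod.stdAddChar (-x) := by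
    intro x; rw [AddChar.map_neg_eq_conj]; rfl
  have hprod : ∀ x y : ZMod d, (((Real.sqrt d : ℂ))⁻¹ * ZMod.stdAddChar x) *
      star (((Real.sqrt d : ℂ))⁻¹ * ZMod.stdAddChar y) = (d : ℂ)⁻¹ * ZMod.stdAddChar (x - y) := by
    intro x y
    rw [star_mul', hst, hch, sub_eq_add_neg, AddChar.map_add_eq_mul, ← hsq]
    ring
  refine ⟨Matrix.of fun i j => ((Real.sqrt d : ℂ))⁻¹ * ZMod.stdAddChar (e i * e j), ?_, ?_⟩
  · rw [Matrix.mem_unitaryGroup_iff, star_eq_conjTranspose]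
    ext i j
    rw [Matrix.mul_apply, Matrix.one_apply]
    simp only [conjTranspose_apply, Matrix.of_apply, hprod]
    rw [← Finset.mul_sum]
    have : ∑ x, (ZMod.stdAddChar (e i * e x - e j * e x) : ℂ)
        = ∑ y : ZMod d, ZMod.stdAddChar (y * (e i - e j)) := by
      rw [← Equiv.sum_comp e]
      refine Finset.sum_congr rfl fun x _ => ?_
      congr 1; ring
    rw [this, AddChar.sum_mulShift _ (ZMod.isPrimitive_stdAddChar d)]
    by_cases h : i = j
    · simp [h, ZMod.card, hd0]
    · have h' : e i - e j ≠ 0 := fun h0 => h (e.injective (sub_eq_zero.1 h0))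
      simp [h, h']
  · intro i j
    simp only [Matrix.of_apply, hprod, sub_self, AddChar.map_zero_eq_one, mul_one]

lemma fq_perm_sum {ι : Type*} [Fintype ι] [DecidableEq ι] (h : ι → ι → ℝ) {i j : ι} (hij : i ≠ j) :
    (Fintype.card ι : ℝ) * (Fintype.card ι - 1) * ∑ π : Equiv.Perm ι, h (π i) (π j) =
      Fintype.card (Equiv.Perm ι) * (∑ k, ∑ l, h k l - ∑ k, h k k) := by
  have hS : ∀ k l, k ≠ l → ∑ π : Equiv.Perm ι, h (π k) (π l) = ∑ π : Equiv.Perm ι, h (π i) (π j) := by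
    intro k l hkl
    let τ : Equiv.Perm ι := Equiv.swap (Equiv.swap k i l) j * Equiv.swap k i
    have h1 : τ k = i := by
      simp only [τ, Equiv.Perm.mul_apply, Equiv.swap_apply_left]
      apply Equiv.swap_apply_of_ne_of_ne _ hij
      intro h
      have : Equiv.swap k i k = Equiv.swap k i l := by rw [Equiv.swap_apply_left]; exact h
      exact hkl ((Equiv.swap k i).injective this)
    have h2 : τ l = j := by
      simp only [τ, Equiv.Perm.mul_apply, Equiv.swap_apply_left]
    conv_lhs => rw [← Equiv.sum_comp (Equiv.mulRight τ⁻¹)]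
    conv_rhs => rw [← h1, ← h2]
    rw [← Equiv.sum_comp (Equiv.mulRight τ⁻¹) (fun π : Equiv.Perm ι => h (π (τ k)) (π (τ l)))]
    conv_rhs => rw [← Equiv.sum_comp (Equiv.mulRight τ)]
    conv_lhs => rw [← Equiv.sum_comp (Equiv.mulRight τ)]
    conv_lhs => rw [← Equiv.sum_comp (Equiv.mulRight τ)]
    refine Finset.sum_congr rfl fun π _ => ?_
    simp
  set S := ∑ π : Equiv.Perm ι, h (π i) (π j) with hSd
  have h1 : ∑ k, ∑ l, (if k = l then 0 else ∑ π : Equiv.Perm ι, h (π k) (π l))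
      = (Fintype.card ι : ℝ) * (Fintype.card ι - 1) * S := by
    have : ∀ k l : ι, (if k = l then 0 else ∑ π : Equiv.Perm ι, h (π k) (π l))
        = S - if k = l then S else 0 := by
      intro k l
      by_cases hkl : k = l
      · simp [hkl]
      · simp [hkl, hS k l hkl]
    simp only [this, Finset.sum_sub_distrib, Finset.sum_ite_eq, Finset.mem_univ, if_true,
      Finset.sum_const, Finset.card_univ, nsmul_eq_mul]
    ring
  have h2 : ∑ k, ∑ l, (if k = l then 0 else ∑ π : Equiv.Perm ι, h (π k) (π l))
      = ∑ π : Equiv.Perm ι, (∑ k, ∑ l, h k l - ∑ k, h k k) := by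
    have e1 : ∀ k l : ι, (if k = l then 0 else ∑ π : Equiv.Perm ι, h (π k) (π l))
        = ∑ π : Equiv.Perm ι, (h (π k) (π l) - if k = l then h (π k) (π k) else 0) := by
      intro k l
      by_cases hkl : k = l
      · simp [hkl]
      · simp [hkl]
    simp only [e1]
    have e2 : ∀ k : ι, ∑ l, ∑ π : Equiv.Perm ι,
        (h (π k) (π l) - if k = l then h (π k) (π k) else 0) =
        ∑ π : Equiv.Perm ι, ∑ l, (h (π k) (π l) - if k = l then h (π k) (π k) else 0) :=
      fun k => Finset.sum_comm
    simp only [e2]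
    rw [Finset.sum_comm]
    refine Finset.sum_congr rfl fun π _ => ?_
    simp only [Finset.sum_sub_distrib, Finset.sum_ite_eq, Finset.mem_univ, if_true]
    congr 1
    · rw [← Equiv.sum_comp π (fun k => ∑ l, h k l)]
      refine Finset.sum_congr rfl fun k _ => ?_
      exact Equiv.sum_comp π (fun l => h (π k) l)
    · exact Equiv.sum_comp π (fun k => h k k)
  rw [← h1, h2]
  simp only [Finset.sum_const, Finset.card_univ, nsmul_eq_mul]

lemma fq_perm_avg {ι : Type*} [Fintype ι] [DecidableEq ι] (c h : ι → ι → ℝ) (hc : ∀ i, c i i = 0) :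
    (Fintype.card ι : ℝ) * (Fintype.card ι - 1) *
      ∑ π : Equiv.Perm ι, ∑ i, ∑ j, c i j * h (π i) (π j) =
      Fintype.card (Equiv.Perm ι) * ((∑ i, ∑ j, c i j) * (∑ k, ∑ l, h k l - ∑ k, h k k)) := by
  have e1 : ∑ π : Equiv.Perm ι, ∑ i, ∑ j, c i j * h (π i) (π j)
      = ∑ i, ∑ j, c i j * ∑ π : Equiv.Perm ι, h (π i) (π j) := by
    rw [Finset.sum_comm]
    refine Finset.sum_congr rfl fun i _ => ?_
    rw [Finset.sum_comm]
    simp only [Finset.mul_sum]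
  rw [e1, Finset.mul_sum, Finset.sum_mul, Finset.mul_sum]
  refine Finset.sum_congr rfl fun i _ => ?_
  rw [Finset.mul_sum, Finset.sum_mul, Finset.mul_sum]
  refine Finset.sum_congr rfl fun j _ => ?_
  by_cases hij : i = j
  · subst hij; simp [hc]
  · have := fq_perm_sum h hij
    linear_combination c i j * this

lemma fqAct_diag {ιR ι ιB : Type} [Fintype ι] [DecidableEq ι] (t : ι → ℂ)
    (ψ : ιR × (ι × ιB) → ℂ) (p) : fqAct (diagonal t) ψ p = t p.2.1 * ψ p := by
  simp [fqAct, diagonal_apply]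

lemma fqG_diag {ιR ι ιB : Type} [Fintype ιR] [Fintype ι] [DecidableEq ι] [Fintype ιB] (t : ι → ℂ)
    (ψ : ιR × (ι × ιB) → ℂ) (i j k l : ι) :
    fqG (fqAct (diagonal t) ψ) i j k l = t i * t j * star (t k) * star (t l) * fqG ψ i j k l := by
  simp only [fqG, fqAct_diag, Finset.mul_sum, star_mul']
  refine Finset.sum_congr rfl fun r _ => Finset.sum_congr rfl fun s _ =>
    Finset.sum_congr rfl fun b _ => Finset.sum_congr rfl fun c _ => ?_
  ring

/-- The permutation matrix `|π a⟩ ↦ |a⟩`. -/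
def fqPerm {ι : Type} [DecidableEq ι] (π : Equiv.Perm ι) : Matrix ι ι ℂ :=
  Matrix.of fun a a' => if π a = a' then 1 else 0

lemma fqAct_perm {ιR ι ιB : Type} [Fintype ι] [DecidableEq ι] (π : Equiv.Perm ι)
    (ψ : ιR × (ι × ιB) → ℂ) (p) : fqAct (fqPerm π) ψ p = ψ (p.1, (π p.2.1, p.2.2)) := by
  simp [fqAct, fqPerm]

lemma fqG_perm {ιR ι ιB : Type} [Fintype ιR] [Fintype ι] [DecidableEq ι] [Fintype ιB]
    (π : Equiv.Perm ι)
    (ψ : ιR × (ι × ιB) → ℂ) (i j k l : ι) :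
    fqG (fqAct (fqPerm π) ψ) i j k l = fqG ψ (π i) (π j) (π k) (π l) := by
  simp only [fqG, fqAct_perm]

lemma fqPerm_unitary {ι : Type} [Fintype ι] [DecidableEq ι] (π : Equiv.Perm ι) :
    fqPerm π ∈ Matrix.unitaryGroup ι ℂ := by
  rw [Matrix.mem_unitaryGroup_iff, star_eq_conjTranspose]
  ext i j
  rw [Matrix.mul_apply, Matrix.one_apply]
  simp [fqPerm, conjTranspose_apply, eq_comm]

lemma fqDiag_unitary {ι : Type} [Fintype ι] [DecidableEq ι] (θ : ι → ZMod 3) :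
    diagonal (fqPh θ) ∈ Matrix.unitaryGroup ι ℂ := by
  rw [Matrix.mem_unitaryGroup_iff, star_eq_conjTranspose, diagonal_conjTranspose,
    diagonal_mul_diagonal, ← diagonal_one]
  congr 1
  funext i
  exact fqPh_mul_star θ i

/-- Stage one: choose phases so that the diagonal weight after a flat unitary is small. -/
lemma fq_stage1 {ιR ι ιB : Type} [Fintype ιR] [Fintype ι] [DecidableEq ι] [Nonempty ι]
    [Fintype ιB] (ψ : ιR × (ι × ιB) → ℂ) :
    ∃ U ∈ Matrix.unitaryGroup ι ℂ,
      (Fintype.card ι : ℝ) * ∑ m, (fqG (fqAct U ψ) m m m m).re ≤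
        purity (redR ψ) + purity (redAR ψ) := by
  obtain ⟨F, hF, hflat⟩ := fq_flat (ι := ι)
  set d := Fintype.card ι with hd
  have hd0 : (d : ℂ) ≠ 0 := by
    have : d ≠ 0 := Fintype.card_ne_zero
    exact_mod_cast this
  have key : ∑ θ : ι → ZMod 3, (d : ℂ) * ∑ m, fqG (fqAct (F * diagonal (fqPh θ)) ψ) m m m m
      = (Fintype.card (ι → ZMod 3) : ℂ) *
        (∑ i, ∑ j, fqG ψ i j i j + ∑ i, ∑ j, fqG ψ i j j i - ∑ i, fqG ψ i i i i) := by
    have e1 : ∀ (θ : ι → ZMod 3) m, fqG (fqAct (F * diagonal (fqPh θ)) ψ) m m m m =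
        ∑ i, ∑ j, ∑ k, ∑ l, (F m i * F m j * star (F m k) * star (F m l) * fqG ψ i j k l) *
          (fqPh θ i * fqPh θ j * star (fqPh θ k) * star (fqPh θ l)) := by
      intro θ m
      rw [fqAct_mul, fqG_act]
      refine Finset.sum_congr rfl fun r _ => Finset.sum_congr rfl fun s _ =>
        Finset.sum_congr rfl fun b _ => Finset.sum_congr rfl fun c _ => ?_
      rw [fqG_diag]
      ring
    have e2 : ∀ m, ∑ θ : ι → ZMod 3, fqG (fqAct (F * diagonal (fqPh θ)) ψ) m m m m =
        ∑ i, ∑ j, ∑ k, ∑ l, (F m i * F m j * star (F m k) * star (F m l) * fqG ψ i j k l) *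
          ((Fintype.card (ι → ZMod 3) : ℂ) * fqInd i j k l) := by
      intro m
      simp only [e1]
      rw [Finset.sum_comm]
      refine Finset.sum_congr rfl fun r _ => ?_
      rw [Finset.sum_comm]
      refine Finset.sum_congr rfl fun r _ => ?_
      rw [Finset.sum_comm]
      refine Finset.sum_congr rfl fun r _ => ?_
      rw [Finset.sum_comm]
      refine Finset.sum_congr rfl fun r _ => ?_
      rw [← Finset.mul_sum, fq_phase_avg]
    have e3 : ∀ m i j k l, F m i * F m j * star (F m k) * star (F m l) * fqInd i j k l
        = (d : ℂ)⁻¹ * (d : ℂ)⁻¹ * fqInd i j k l := by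
      intro m i j k l
      by_cases h1 : i = k ∧ j = l
      · obtain ⟨rfl, rfl⟩ := h1
        linear_combination (F m j * star (F m j) * fqInd i j i j) * hflat m i +
          ((d : ℂ)⁻¹ * fqInd i j i j) * hflat m j
      · by_cases h2 : i = l ∧ j = k
        · obtain ⟨rfl, rfl⟩ := h2
          linear_combination (F m j * star (F m j) * fqInd i j j i) * hflat m i +
            ((d : ℂ)⁻¹ * fqInd i j j i) * hflat m j
        · have h3 : ¬ (i = j ∧ i = k ∧ i = l) := by
            rintro ⟨rfl, rfl, rfl⟩; exact h1 ⟨rfl, rfl⟩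
          have : fqInd i j k l = 0 := by simp [fqInd, h1, h2, h3]
          simp [this]
    have e4 : ∀ m, ∑ θ : ι → ZMod 3, fqG (fqAct (F * diagonal (fqPh θ)) ψ) m m m m =
        ((d : ℂ)⁻¹ * (d : ℂ)⁻¹ * (Fintype.card (ι → ZMod 3) : ℂ)) *
        ∑ i, ∑ j, ∑ k, ∑ l, fqInd i j k l * fqG ψ i j k l := by
      intro m
      rw [e2]
      simp only [Finset.mul_sum]
      refine Finset.sum_congr rfl fun i _ => Finset.sum_congr rfl fun j _ =>
        Finset.sum_congr rfl fun k _ => Finset.sum_congr rfl fun l _ => ?_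
      linear_combination (fqG ψ i j k l * (Fintype.card (ι → ZMod 3) : ℂ)) * e3 m i j k l
    have e5 : ∑ i, ∑ j, ∑ k, ∑ l, fqInd i j k l * fqG ψ i j k l =
        ∑ i, ∑ j, fqG ψ i j i j + ∑ i, ∑ j, fqG ψ i j j i - ∑ i, fqG ψ i i i i := by
      simp only [fqInd, sub_mul, add_mul, ite_and, ite_mul, one_mul, zero_mul,
        Finset.sum_sub_distrib, Finset.sum_add_distrib]
      congr 1
      · congr 1
        · simp
        · refine Finset.sum_congr rfl fun i _ => Finset.sum_congr rfl fun j _ => ?_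
          rw [Finset.sum_comm]
          simp
      · simp
    rw [← Finset.mul_sum, Finset.sum_comm]
    simp only [e4, e5]
    rw [Finset.sum_const, Finset.card_univ, nsmul_eq_mul, ← hd]
    field_simp
  have hre : ∑ θ : ι → ZMod 3, (d : ℝ) * ∑ m, (fqG (fqAct (F * diagonal (fqPh θ)) ψ) m m m m).re
      ≤ ∑ θ : ι → ZMod 3, (purity (redR ψ) + purity (redAR ψ)) := by
    have h := congrArg Complex.re key
    have hl : (∑ θ : ι → ZMod 3, (d : ℂ) * ∑ m, fqG (fqAct (F * diagonal (fqPh θ)) ψ) m m m m).re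
        = ∑ θ : ι → ZMod 3, (d : ℝ) * ∑ m, (fqG (fqAct (F * diagonal (fqPh θ)) ψ) m m m m).re := by
      rw [Complex.re_sum]
      refine Finset.sum_congr rfl fun θ _ => ?_
      rw [← Complex.ofReal_natCast, Complex.re_ofReal_mul, Complex.re_sum]
    rw [hl] at h
    rw [h, Finset.sum_const, Finset.card_univ, nsmul_eq_mul, ← Complex.ofReal_natCast,
      Complex.re_ofReal_mul, Complex.sub_re, Complex.add_re, ← fq_purityR, ← fq_purityAR]
    have h0 : 0 ≤ (∑ i, fqG ψ i i i i).re := by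
      rw [Complex.re_sum]; exact Finset.sum_nonneg fun i _ => fqG_diag_nonneg ψ i
    gcongr
    linarith
  obtain ⟨θ, -, hθ⟩ := Finset.exists_le_of_sum_le Finset.univ_nonempty hre
  exact ⟨F * diagonal (fqPh θ), mul_mem hF (fqDiag_unitary θ), hθ⟩

/-- Purity of the reduced state on `A₂R`, expressed via the tensor `fqG`. -/
noncomputable def fqOut {ιR ι₁ ι₂ ιB : Type} [Fintype ιR] [Fintype ι₁] [Fintype ι₂] [Fintype ιB]
    (ψ : ιR × ((ι₁ × ι₂) × ιB) → ℂ) : ℂ :=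
  ∑ i : ι₁ × ι₂, ∑ j : ι₁ × ι₂, fqG ψ i j (i.1, j.2) (j.1, i.2)

lemma fq_stage2a {ιR ι₁ ι₂ ιB : Type} [Fintype ιR] [Fintype ι₁] [Fintype ι₂] [Fintype ιB]
    [DecidableEq ι₁] [DecidableEq ι₂]
    (ψ : ιR × ((ι₁ × ι₂) × ιB) → ℂ) (π : Equiv.Perm (ι₁ × ι₂)) :
    ∃ θ : ι₁ × ι₂ → ZMod 3, (fqOut (fqAct (fqPerm π * diagonal (fqPh θ)) ψ)).re ≤
      ∑ i, ∑ j, ((if i.2 = j.2 then 1 else 0) - (if i = j then 1 else 0)) *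
          (fqG ψ (π i) (π j) (π i) (π j)).re +
      ∑ i, ∑ j, ((if i.1 = j.1 then 1 else 0) - (if i = j then 1 else 0)) *
          (fqG ψ (π i) (π j) (π j) (π i)).re +
      ∑ i, (fqG ψ i i i i).re := by
  have hind : ∀ i j : ι₁ × ι₂, fqInd (π i) (π j) (π (i.1, j.2)) (π (j.1, i.2)) =
      (if i.2 = j.2 then 1 else 0) + (if i.1 = j.1 then 1 else 0) - (if i = j then 1 else 0) := by
    rintro ⟨i1, i2⟩ ⟨j1, j2⟩
    simp only [fqInd, π.injective.eq_iff, Prod.mk.injEq]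
    by_cases h1 : i1 = j1 <;> by_cases h2 : i2 = j2 <;> simp [h1, h2, eq_comm]
  have key : ∑ θ : ι₁ × ι₂ → ZMod 3, fqOut (fqAct (fqPerm π * diagonal (fqPh θ)) ψ) =
      ∑ θ : ι₁ × ι₂ → ZMod 3, ∑ i, ∑ j, fqInd (π i) (π j) (π (i.1, j.2)) (π (j.1, i.2)) *
        fqG ψ (π i) (π j) (π (i.1, j.2)) (π (j.1, i.2)) := by
    rw [Finset.sum_const, Finset.card_univ, nsmul_eq_mul]
    simp only [fqOut, fqAct_mul, fqG_perm, fqG_diag]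
    rw [Finset.sum_comm, Finset.mul_sum]
    refine Finset.sum_congr rfl fun i _ => ?_
    rw [Finset.sum_comm, Finset.mul_sum]
    refine Finset.sum_congr rfl fun j _ => ?_
    rw [← Finset.sum_mul, fq_phase_avg]
    ring
  have hval : (∑ i, ∑ j, fqInd (π i) (π j) (π (i.1, j.2)) (π (j.1, i.2)) *
        fqG ψ (π i) (π j) (π (i.1, j.2)) (π (j.1, i.2))).re =
      ∑ i, ∑ j, ((if i.2 = j.2 then 1 else 0) - (if i = j then 1 else 0)) *
          (fqG ψ (π i) (π j) (π i) (π j)).re +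
      ∑ i, ∑ j, ((if i.1 = j.1 then 1 else 0) - (if i = j then 1 else 0)) *
          (fqG ψ (π i) (π j) (π j) (π i)).re +
      ∑ i, (fqG ψ i i i i).re := by
    have e0 : ∑ i, (fqG ψ i i i i).re = ∑ i, ∑ j, if i = j then
        (fqG ψ (π i) (π j) (π j) (π i)).re else 0 := by
      simp only [Finset.sum_ite_eq, Finset.mem_univ, if_true]
      exact (Equiv.sum_comp π (fun i => (fqG ψ i i i i).re)).symm
    rw [e0, Complex.re_sum, ← Finset.sum_add_distrib, ← Finset.sum_add_distrib]
    refine Finset.sum_congr rfl fun i _ => ?_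
    rw [Complex.re_sum, ← Finset.sum_add_distrib, ← Finset.sum_add_distrib]
    refine Finset.sum_congr rfl fun j _ => ?_
    rw [hind]
    obtain ⟨i1, i2⟩ := i
    obtain ⟨j1, j2⟩ := j
    by_cases h1 : i1 = j1 <;> by_cases h2 : i2 = j2
    · subst h1; subst h2; simp
    · subst h1; simp [h2]
    · subst h2; simp [h1]
    · simp [h1, h2]
  have hre := congrArg Complex.re key
  rw [Complex.re_sum, Complex.re_sum] at hre
  obtain ⟨θ, -, hθ⟩ := Finset.exists_le_of_sum_le Finset.univ_nonempty hre.le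
  exact ⟨θ, hθ.trans hval.le⟩

lemma fq_arith {d1 d2 a b δ f : ℝ} (h1 : 1 ≤ d1) (h2 : 1 ≤ d2) (hd : 1 < d1 * d2)
    (ha0 : 0 ≤ a) (hb0 : 0 ≤ b) (hδ : d1 * d2 * δ ≤ a + b)
    (hπ : (d1 * d2 * (d1 * d2 - 1)) * f ≤ d1 * d2 * (d1 - 1) * (a - δ) +
      d1 * d2 * (d2 - 1) * (b - δ) + (d1 * d2 * (d1 * d2 - 1)) * δ) :
    f ≤ a / d2 + b / d1 := by
  have hdp : 0 < d1 * d2 := by linarith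
  have hd1p : 0 < d1 * d2 - 1 := by linarith
  have g2 : (d1 - 1) * (d2 - 1) * (d1 * d2 * δ) ≤ (d1 - 1) * (d2 - 1) * (a + b) :=
    mul_le_mul_of_nonneg_left hδ (mul_nonneg (by linarith) (by linarith))
  have g3 : (d1 * d2 - 1) * (d1 * d2 * f) ≤ (d1 * d2 - 1) * (d1 * a + d2 * b) := by
    have u1 : 0 ≤ (d2 - 1) * a := mul_nonneg (by linarith) ha0
    have u2 : 0 ≤ (d1 - 1) * b := mul_nonneg (by linarith) hb0
    linarith
  have g4 := le_of_mul_le_mul_left g3 hd1p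
  have hd1' : d1 ≠ 0 := by linarith
  have hd2' : d2 ≠ 0 := by linarith
  have : a / d2 + b / d1 = (d1 * a + d2 * b) / (d1 * d2) := by
    field_simp
  rw [this, le_div_iff₀ hdp]
  linarith

lemma fq_decouple {ιR ι₁ ι₂ ιB : Type} [Fintype ιR] [DecidableEq ιR] [Fintype ι₁] [Fintype ι₂]
    [Fintype ιB] [DecidableEq ι₁] [DecidableEq ι₂] [Nonempty ι₁] [Nonempty ι₂]
    (ψ : ιR × ((ι₁ × ι₂) × ιB) → ℂ) :
    ∃ U ∈ Matrix.unitaryGroup (ι₁ × ι₂) ℂ,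
      (fqOut (fqAct U ψ)).re ≤ purity (redR ψ) / Fintype.card ι₂
        + purity (redAR ψ) / Fintype.card ι₁ := by
  set d1 : ℝ := ((Fintype.card ι₁ : ℕ) : ℝ) with hd1
  set d2 : ℝ := ((Fintype.card ι₂ : ℕ) : ℝ) with hd2
  have h1 : 1 ≤ d1 := by rw [hd1]; exact_mod_cast Fintype.card_pos
  have h2 : 1 ≤ d2 := by rw [hd2]; exact_mod_cast Fintype.card_pos
  set a := purity (redR ψ) with ha
  set b := purity (redAR ψ) with hb
  have pos : ∀ {n : Type} [Fintype n] (M : Matrix n n ℂ), M.IsHermitian → 0 ≤ purity M := by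
    intro n _ M hM
    have := fq_re_trace_nonneg (posSemidef_conjTranspose_mul_self M)
    rwa [hM.eq] at this
  have ha0 : 0 ≤ a := by
    apply pos
    ext i j
    simp only [redR, conjTranspose_apply, Matrix.of_apply, star_sum, star_mul', star_star]
    exact Finset.sum_congr rfl fun _ _ => mul_comm _ _
  have hb0 : 0 ≤ b := by
    apply pos
    ext i j
    simp only [redAR, conjTranspose_apply, Matrix.of_apply, star_sum, star_mul', star_star]
    exact Finset.sum_congr rfl fun _ _ => mul_comm _ _
  by_cases hsub : Subsingleton (ι₁ × ι₂)
  · refine ⟨1, one_mem _, ?_⟩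
    have e1 : fqAct (1 : Matrix (ι₁ × ι₂) (ι₁ × ι₂) ℂ) ψ = ψ := by
      funext p
      rw [← diagonal_one, fqAct_diag, one_mul]
    have e2 : (fqOut ψ).re = a := by
      rw [ha, fq_purityR, fqOut]
      congr 1
      refine Finset.sum_congr rfl fun i _ => Finset.sum_congr rfl fun j _ => ?_
      rw [Subsingleton.elim (i.1, j.2) i, Subsingleton.elim (j.1, i.2) j]
    have e3 : Fintype.card ι₂ = 1 := by
      have : Fintype.card (ι₁ × ι₂) ≤ 1 := Fintype.card_le_one_iff_subsingleton.2 hsub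
      rw [Fintype.card_prod] at this
      have p1 : 0 < Fintype.card ι₁ := Fintype.card_pos
      have p2 : 0 < Fintype.card ι₂ := Fintype.card_pos
      nlinarith
    rw [e1, e2, hd2, e3]
    have : 0 ≤ b / d1 := by positivity
    simpa using this
  have hd : 1 < d1 * d2 := by
    have : 1 < Fintype.card (ι₁ × ι₂) := by
      by_contra h
      exact hsub (Fintype.card_le_one_iff_subsingleton.1 (not_lt.1 h))
    rw [Fintype.card_prod] at this
    rw [hd1, hd2]; exact_mod_cast this
  obtain ⟨U₁, hU₁, hδ⟩ := fq_stage1 ψ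
  set φ := fqAct U₁ ψ with hφ
  have haφ : purity (redR φ) = a := by rw [hφ, fq_redR_act U₁ hU₁]
  have hbφ : purity (redAR φ) = b := by rw [hφ, fq_redAR_act U₁ hU₁]
  set δ := ∑ m, (fqG φ m m m m).re with hδd
  have hcard : (Fintype.card (ι₁ × ι₂) : ℝ) = d1 * d2 := by
    rw [Fintype.card_prod, hd1, hd2]; push_cast; rfl
  rw [hcard] at hδ
  -- permutation average
  let c1 : ι₁ × ι₂ → ι₁ × ι₂ → ℝ := fun i j =>
    (if i.2 = j.2 then 1 else 0) - (if i = j then 1 else 0)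
  let c2 : ι₁ × ι₂ → ι₁ × ι₂ → ℝ := fun i j =>
    (if i.1 = j.1 then 1 else 0) - (if i = j then 1 else 0)
  let H1 : ι₁ × ι₂ → ι₁ × ι₂ → ℝ := fun i j => (fqG φ i j i j).re
  let H2 : ι₁ × ι₂ → ι₁ × ι₂ → ℝ := fun i j => (fqG φ i j j i).re
  have hH1 : ∑ k, ∑ l, H1 k l = a := by
    rw [← haφ, fq_purityR]; simp only [Complex.re_sum, H1]
  have hH2 : ∑ k, ∑ l, H2 k l = b := by
    rw [← hbφ, fq_purityAR]; simp only [Complex.re_sum, H2]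
  have hc1 : ∑ i, ∑ j, c1 i j = d1 * d2 * (d1 - 1) := by
    simp only [c1, Finset.sum_sub_distrib, Fintype.sum_prod_type]
    simp [Finset.card_univ, Prod.mk.injEq, ite_and, ← hd1, ← hd2]
    ring
  have hc2 : ∑ i, ∑ j, c2 i j = d1 * d2 * (d2 - 1) := by
    simp only [c2, Finset.sum_sub_distrib, Fintype.sum_prod_type]
    have inner : ∀ i1 : ι₁, ∑ j1 : ι₁, ∑ j2 : ι₂, (if i1 = j1 then (1 : ℝ) else 0) = d2 := by
      intro i1
      rw [Finset.sum_comm]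
      simp [hd2]
    simp only [inner]
    simp [Finset.card_univ, Prod.mk.injEq, ite_and, ← hd1, ← hd2]
    ring
  have A1 := fq_perm_avg c1 H1 (by intro i; simp [c1])
  have A2 := fq_perm_avg c2 H2 (by intro i; simp [c2])
  rw [hcard, hc1, hH1] at A1
  rw [hcard, hc2, hH2] at A2
  have hsum : ∑ π : Equiv.Perm (ι₁ × ι₂), (d1 * d2 * (d1 * d2 - 1)) *
      (∑ i, ∑ j, c1 i j * H1 (π i) (π j) + ∑ i, ∑ j, c2 i j * H2 (π i) (π j) + δ)
      ≤ ∑ π : Equiv.Perm (ι₁ × ι₂), (d1 * d2 * (d1 - 1) * (a - δ) + d1 * d2 * (d2 - 1) * (b - δ) +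
        (d1 * d2 * (d1 * d2 - 1)) * δ) := by
    rw [← Finset.mul_sum, Finset.sum_add_distrib, Finset.sum_add_distrib, mul_add, mul_add, A1, A2,
      Finset.sum_const, Finset.sum_const, Finset.card_univ, nsmul_eq_mul, nsmul_eq_mul]
    apply le_of_eq
    simp only [H1, H2, ← hδd]
    ring
  obtain ⟨π, -, hπ⟩ := Finset.exists_le_of_sum_le Finset.univ_nonempty hsum
  obtain ⟨θ, hθ⟩ := fq_stage2a φ π
  refine ⟨fqPerm π * diagonal (fqPh θ) * U₁,
    mul_mem (mul_mem (fqPerm_unitary π) (fqDiag_unitary θ)) hU₁, ?_⟩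
  rw [fqAct_mul, ← hφ]
  refine hθ.trans ?_
  change (∑ i, ∑ j, c1 i j * H1 (π i) (π j) + ∑ i, ∑ j, c2 i j * H2 (π i) (π j) + δ) ≤ _
  set f := (∑ i, ∑ j, c1 i j * H1 (π i) (π j) + ∑ i, ∑ j, c2 i j * H2 (π i) (π j) + δ)
  exact fq_arith h1 h2 hd ha0 hb0 hδ hπ

/-! ### Final assembly -/

lemma fq_purity_nonneg {n : Type} [Fintype n] (M : Matrix n n ℂ) (hM : M.IsHermitian) :
    0 ≤ purity M := by
  have := fq_re_trace_nonneg (posSemidef_conjTranspose_mul_self M)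
  rwa [hM.eq] at this

lemma fq_sum8 {I J R B : Type} [Fintype I] [Fintype J] [Fintype R] [Fintype B]
    (f : I → J → I → J → R → R → B → B → ℂ) :
    ∑ a2, ∑ r, ∑ c2, ∑ s, ∑ a1, ∑ b, ∑ c1, ∑ c, f a1 a2 c1 c2 r s b c
      = ∑ a1, ∑ a2, ∑ c1, ∑ c2, ∑ r, ∑ s, ∑ b, ∑ c, f a1 a2 c1 c2 r s b c := by
  let e : (J × R × J × R × I × B × I × B) ≃ (I × J × I × J × R × R × B × B) :=
    { toFun := fun ⟨a2, r, c2, s, a1, b, c1, c⟩ => ⟨a1, a2, c1, c2, r, s, b, c⟩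
      invFun := fun ⟨a1, a2, c1, c2, r, s, b, c⟩ => ⟨a2, r, c2, s, a1, b, c1, c⟩
      left_inv := fun _ => rfl
      right_inv := fun _ => rfl }
  have := Fintype.sum_equiv e
    (fun x => f x.2.2.2.2.1 x.1 x.2.2.2.2.2.2.1 x.2.2.1 x.2.1 x.2.2.2.1 x.2.2.2.2.2.1
      x.2.2.2.2.2.2.2)
    (fun y => f y.1 y.2.1 y.2.2.1 y.2.2.2.1 y.2.2.2.2.1 y.2.2.2.2.2.1 y.2.2.2.2.2.2.1
      y.2.2.2.2.2.2.2) (fun _ => rfl)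
  simpa only [Fintype.sum_prod_type] using this

lemma fq_swap4 {I B : Type} [Fintype I] [Fintype B] (f : I → B → I → B → ℂ) :
    ∑ a, ∑ b, ∑ c, ∑ d, f a b c d = ∑ a, ∑ b, ∑ c, ∑ d, f c d a b := by
  have := Finset.sum_comm (s := (Finset.univ : Finset (I × B)))
    (t := (Finset.univ : Finset (I × B))) (f := fun p q => f p.1 p.2 q.1 q.2)
  simpa only [Fintype.sum_prod_type] using this

/-- The matrix `A₂R × A₁B` of coefficients of a vector. -/
def fqX {ιR ι₁ ι₂ ιB : Type} (φ : ιR × ((ι₁ × ι₂) × ιB) → ℂ) : Matrix (ι₂ × ιR) (ι₁ × ιB) ℂ :=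
  Matrix.of fun p q => φ (p.2, ((q.1, p.1), q.2))

/-- The matrix of coefficients of the target vector. -/
noncomputable def fqY {ιR ι₁ ι₂ ιB : Type} [Fintype ι₂] [DecidableEq ι₂]
    (ψ : ιR × ((ι₁ × ι₂) × ιB) → ℂ) :
    Matrix (ι₂ × ιR) (((ι₁ × ι₂) × ιB) × ι₂) ℂ :=
  Matrix.of fun p q => ψ (p.2, q.1) * maxEntVec ι₂ (p.1, q.2)

lemma fqX_sq {ιR ι₁ ι₂ ιB : Type} [Fintype ιR] [Fintype ι₁] [Fintype ι₂] [Fintype ιB]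
    (φ : ιR × ((ι₁ × ι₂) × ιB) → ℂ) :
    ((fqX φ * (fqX φ)ᴴ) * (fqX φ * (fqX φ)ᴴ)).trace = fqOut φ := by
  simp only [fqOut, fqG, Fintype.sum_prod_type]
  rw [← fq_sum8 (fun a1 a2 c1 c2 r s b c => φ (r, ((a1, a2), b)) * φ (s, ((c1, c2), c)) *
    star (φ (s, ((a1, c2), b))) * star (φ (r, ((c1, a2), c))))]
  simp only [Matrix.trace, Matrix.diag_apply, Matrix.mul_apply, Fintype.sum_prod_type,
    conjTranspose_apply, fqX, Matrix.of_apply, Finset.sum_mul, Finset.mul_sum]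
  refine Finset.sum_congr rfl fun a2 _ => Finset.sum_congr rfl fun r _ =>
    Finset.sum_congr rfl fun c2 _ => Finset.sum_congr rfl fun s _ => ?_
  rw [fq_swap4]
  refine Finset.sum_congr rfl fun a1 _ => Finset.sum_congr rfl fun b _ =>
    Finset.sum_congr rfl fun c1 _ => Finset.sum_congr rfl fun c _ => ?_
  ring

lemma fqX_ptr {ιR ι₁ ι₂ ιB : Type} [Fintype ιR] [Fintype ι₁] [Fintype ι₂] [Fintype ιB]
    (φ : ιR × ((ι₁ × ι₂) × ιB) → ℂ) (r s : ιR) :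
    ∑ a, (fqX φ * (fqX φ)ᴴ) (a, r) (a, s) = redR φ r s := by
  simp only [Matrix.mul_apply, Fintype.sum_prod_type, conjTranspose_apply, fqX, Matrix.of_apply,
    redR]
  rw [Finset.sum_comm]

lemma fq_trace_ptr {ιR ι₂ : Type} [Fintype ιR] [Fintype ι₂]
    (M : Matrix (ι₂ × ιR) (ι₂ × ιR) ℂ) (N : Matrix ιR ιR ℂ)
    (h : ∀ r s, ∑ a, M (a, r) (a, s) = N r s) : M.trace = N.trace := by
  simp only [Matrix.trace, Matrix.diag_apply, Fintype.sum_prod_type]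
  rw [Finset.sum_comm]
  exact Finset.sum_congr rfl fun r _ => h r r

lemma fqY_mul {ιR ι₁ ι₂ ιB : Type} [Fintype ιR] [Fintype ι₁] [Fintype ι₂] [Fintype ιB]
    [DecidableEq ι₂] (ψ : ιR × ((ι₁ × ι₂) × ιB) → ℂ) (p q : ι₂ × ιR) :
    (fqY ψ * (fqY ψ)ᴴ) p q =
      if q.1 = p.1 then ((Fintype.card ι₂ : ℂ))⁻¹ * redR ψ p.2 q.2 else 0 := by
  have hs : ((Real.sqrt (Fintype.card ι₂) : ℂ))⁻¹ * ((Real.sqrt (Fintype.card ι₂) : ℂ))⁻¹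
      = ((Fintype.card ι₂ : ℂ))⁻¹ := by
    rw [← mul_inv, ← Complex.ofReal_mul, Real.mul_self_sqrt (Nat.cast_nonneg _),
      Complex.ofReal_natCast]
  rw [Matrix.mul_apply, Fintype.sum_prod_type]
  simp only [conjTranspose_apply, fqY, Matrix.of_apply, maxEntVec, redR]
  have : ∀ x : (ι₁ × ι₂) × ιB, (∑ y : ι₂, ψ (p.2, x) *
      (if p.1 = y then ((Real.sqrt (Fintype.card ι₂) : ℂ))⁻¹ else 0) *
      star (ψ (q.2, x) * (if q.1 = y then ((Real.sqrt (Fintype.card ι₂) : ℂ))⁻¹ else 0)))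
      = if q.1 = p.1 then ((Fintype.card ι₂ : ℂ))⁻¹ * (ψ (p.2, x) * star (ψ (q.2, x))) else 0 := by
    intro x
    rw [Finset.sum_eq_single p.1]
    · by_cases hq : q.1 = p.1
      · simp only [hq, if_true, ← hs, star_mul', star_inv₀, Complex.star_def, Complex.conj_ofReal]
        ring
      · simp [hq]
    · intro y _ hy
      simp [Ne.symm hy]
    · simp
  simp only [this]
  by_cases hq : q.1 = p.1
  · simp only [hq, if_true, Finset.mul_sum]
  · simp [hq]

lemma fqY_ptr {ιR ι₁ ι₂ ιB : Type} [Fintype ιR] [Fintype ι₁] [Fintype ι₂] [Fintype ιB]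
    [DecidableEq ι₂] [Nonempty ι₂] (ψ : ιR × ((ι₁ × ι₂) × ιB) → ℂ) (r s : ιR) :
    ∑ a, (fqY ψ * (fqY ψ)ᴴ) (a, r) (a, s) = redR ψ r s := by
  simp only [fqY_mul, if_true, Finset.sum_const, Finset.card_univ, nsmul_eq_mul]
  have : (Fintype.card ι₂ : ℂ) ≠ 0 := by exact_mod_cast Fintype.card_ne_zero
  rw [← mul_assoc, mul_inv_cancel₀ this, one_mul]

lemma fq_trace_mulY {ιR ι₁ ι₂ ιB : Type} [Fintype ιR] [Fintype ι₁] [Fintype ι₂] [Fintype ιB]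
    [DecidableEq ι₂] (ψ : ιR × ((ι₁ × ι₂) × ιB) → ℂ)
    (M : Matrix (ι₂ × ιR) (ι₂ × ιR) ℂ) (N : Matrix ιR ιR ℂ)
    (h : ∀ r s, ∑ a, M (a, r) (a, s) = N r s) :
    (M * (fqY ψ * (fqY ψ)ᴴ)).trace = ((Fintype.card ι₂ : ℂ))⁻¹ * (N * redR ψ).trace := by
  simp only [Matrix.trace, Matrix.diag_apply]
  rw [Fintype.sum_prod_type, Finset.sum_comm, Finset.mul_sum]
  refine Finset.sum_congr rfl fun r _ => ?_
  simp only [Matrix.mul_apply (M := M), Matrix.mul_apply (M := N), fqY_mul]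
  simp only [Fintype.sum_prod_type_right, Finset.mul_sum, mul_ite, mul_zero, ← h]
  simp only [Finset.sum_ite_eq, Finset.mem_univ, if_true]
  rw [Finset.sum_comm]
  refine Finset.sum_congr rfl fun s _ => ?_
  rw [Finset.sum_mul, Finset.mul_sum]
  exact Finset.sum_congr rfl fun a _ => by ring

lemma fq_delta {ιR ι₁ ι₂ ιB : Type} [Fintype ιR] [Fintype ι₁] [Fintype ι₂] [Fintype ιB]
    [DecidableEq ι₂] [Nonempty ι₂] (φ ψ : ιR × ((ι₁ × ι₂) × ιB) → ℂ) (h : redR φ = redR ψ) :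
    ((fqX φ * (fqX φ)ᴴ - fqY ψ * (fqY ψ)ᴴ) * (fqX φ * (fqX φ)ᴴ - fqY ψ * (fqY ψ)ᴴ)).trace.re
      = (fqOut φ).re - purity (redR ψ) / Fintype.card ι₂ := by
  have e1 := fqX_sq φ
  have e2 := fq_trace_mulY ψ _ _ (fqX_ptr φ)
  have e3 := fq_trace_mulY ψ _ _ (fqY_ptr ψ)
  have e4 := Matrix.trace_mul_comm (fqY ψ * (fqY ψ)ᴴ) (fqX φ * (fqX φ)ᴴ)
  rw [h] at e2
  rw [sub_mul, mul_sub, mul_sub, Matrix.trace_sub, Matrix.trace_sub, Matrix.trace_sub, e4, e1, e2,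
    e3]
  simp only [purity]
  rw [sub_self, sub_zero, Complex.sub_re]
  congr 1
  rw [← Complex.ofReal_natCast, ← Complex.ofReal_inv, Complex.re_ofReal_mul]
  ring

lemma fq_final_arith {t c s a b pA d1 d2 dR : ℝ} (hc0 : 0 ≤ c)
    (ht : t ≤ 2 * Real.sqrt (1 - c ^ 2)) (hs : s ≤ b / d1)
    (hc : 1 - Real.sqrt (d2 * dR * s) / 2 ≤ c)
    (h1 : 0 < d1) (h2 : 0 < d2) (hR : 0 < dR) (ha : 0 ≤ a) (hb : 0 ≤ b) (hA : 0 ≤ pA) :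
    t ≤ 2 * ((2 * (d1 * d2) * dR / d1 ^ 2) * (b + 2 * pA * a)) ^ ((1 : ℝ) / 4) := by
  set K := (2 * (d1 * d2) * dR / d1 ^ 2) * (b + 2 * pA * a) with hK
  have hK0 : 0 ≤ K := by positivity
  have hle : d2 * dR * s ≤ K := by
    calc d2 * dR * s ≤ d2 * dR * (b / d1) := by gcongr
      _ = ((d1 * d2) * dR / d1 ^ 2) * b := by field_simp
      _ ≤ K := by
        have : K - ((d1 * d2) * dR / d1 ^ 2) * b =
            ((d1 * d2) * dR / d1 ^ 2) * (b + 4 * (pA * a)) := by rw [hK]; ring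
        have : 0 ≤ ((d1 * d2) * dR / d1 ^ 2) * (b + 4 * (pA * a)) := by positivity
        linarith
  have hε := Real.sqrt_le_sqrt hle
  set ε := Real.sqrt K with hεd
  have hε0 : 0 ≤ ε := Real.sqrt_nonneg _
  have key : 1 - c ^ 2 ≤ ε := by
    have hc' : 1 - ε / 2 ≤ c := by linarith
    rcases le_total ε 2 with h | h
    · nlinarith
    · nlinarith
  have h4 : K ^ ((1 : ℝ) / 4) = Real.sqrt ε := by
    rw [hεd, Real.sqrt_eq_rpow, Real.sqrt_eq_rpow, ← Real.rpow_mul hK0]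
    norm_num
  rw [h4]
  have := Real.sqrt_le_sqrt key
  linarith

/-- **Theorem 1: one-shot fully quantum Slepian–Wolf.**  For a pure state `ψ` on
`R ⊗ (A₁⊗A₂) ⊗ B` there are a unitary `U` on `A = A₁ ⊗ A₂`, a space `B̃` of dimension
`d_{A₂}` (a copy of `A₂`), and an isometry `V : A₁ ⊗ B → (A ⊗ B) ⊗ B̃` such that, after
reordering tensor factors,
`‖ (V∘U) ψ (V∘U)† − ψ^{R(AB)} ⊗ Φ^{A₂B̃} ‖₁
   ≤ 2 [ (2 d_A d_R / d_{A₁}²) ( Tr[(ψ^{AR})²] + 2 Tr[(ψ^A)²] Tr[(ψ^R)²] ) ]^{1/4}`,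
where `ψ^{R(AB)}` is `ψ` itself, regarded as a pure state on `R ⊗ (A⊗B)`. -/
theorem one_shot_FQSW
    {ιR ιA₁ ιA₂ ιB : Type}
    [Fintype ιR] [DecidableEq ιR] [Fintype ιA₁] [DecidableEq ιA₁]
    [Fintype ιA₂] [DecidableEq ιA₂] [Fintype ιB] [DecidableEq ιB]
    (ψ : ιR × ((ιA₁ × ιA₂) × ιB) → ℂ)
    (hψ : star ψ ⬝ᵥ ψ = 1) :
    ∃ (U : Matrix (ιA₁ × ιA₂) (ιA₁ × ιA₂) ℂ)
      (V : Matrix (((ιA₁ × ιA₂) × ιB) × ιA₂) (ιA₁ × ιB) ℂ),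
      U ∈ Matrix.unitaryGroup (ιA₁ × ιA₂) ℂ ∧ Vᴴ * V = 1 ∧
      traceNorm
          (fqswMap (ιR := ιR) U V * pureState ψ * (fqswMap (ιR := ιR) U V)ᴴ - pureState ψ ⊗ₖ maxEntState ιA₂)
        ≤ 2 * ((2 * (Fintype.card ιA₁ * Fintype.card ιA₂ : ℝ) * (Fintype.card ιR : ℝ)
              / (Fintype.card ιA₁ : ℝ) ^ 2)
            * (purity (redAR ψ) + 2 * purity (redA ψ) * purity (redR ψ)))
            ^ ((1 : ℝ) / 4) := by
  classical
  have hne : Nonempty (ιR × ((ιA₁ × ιA₂) × ιB)) := by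
    by_contra h
    rw [not_nonempty_iff] at h
    simp [dotProduct] at hψ
  obtain ⟨r0, ⟨⟨a10, a20⟩, b0⟩⟩ := hne
  have : Nonempty ιR := ⟨r0⟩
  have : Nonempty ιA₁ := ⟨a10⟩
  have : Nonempty ιA₂ := ⟨a20⟩
  have : Nonempty ιB := ⟨b0⟩
  obtain ⟨U, hU, hf⟩ := fq_decouple ψ
  set φ := fqAct U ψ with hφ
  have hred : redR φ = redR ψ := by rw [hφ, fq_redR_act U hU]
  have htr : (redR ψ).trace = 1 := by
    rw [← hψ]
    simp only [Matrix.trace, Matrix.diag_apply, redR, Matrix.of_apply, dotProduct, Pi.star_apply]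
    rw [Fintype.sum_prod_type]
    exact Finset.sum_congr rfl fun _ _ => Finset.sum_congr rfl fun _ _ => mul_comm _ _
  have hX : (fqX φ * (fqX φ)ᴴ).trace = 1 := by
    rw [fq_trace_ptr _ _ (fqX_ptr φ), hred, htr]
  have hY : (fqY ψ * (fqY ψ)ᴴ).trace = 1 := by
    rw [fq_trace_ptr _ _ (fqY_ptr ψ), htr]
  have hcard : Fintype.card (ιA₁ × ιB) ≤ Fintype.card (((ιA₁ × ιA₂) × ιB) × ιA₂) :=
    Fintype.card_le_of_injective (fun p => (((p.1, a20), p.2), a20)) (by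
      rintro ⟨x, y⟩ ⟨x', y'⟩ h
      simp only [Prod.mk.injEq] at h ⊢
      exact ⟨h.1.1.1, h.1.2⟩)
  obtain ⟨W, hW, hWc⟩ := fq_uhlmann (fqX φ) (fqY ψ) hcard hX hY
  rw [fq_delta φ ψ hred] at hWc
  have hV : (Wᵀ)ᴴ * Wᵀ = 1 := by
    have : (Wᵀ)ᴴ * Wᵀ = (W * Wᴴ)ᵀ := by
      rw [Matrix.transpose_mul]; rfl
    rw [this, hW, Matrix.transpose_one]
  refine ⟨U, Wᵀ, hU, hV, ?_⟩
  set u := fqswMap (ιR := ιR) U Wᵀ *ᵥ ψ with hu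
  set v : (ιR × ((ιA₁ × ιA₂) × ιB)) × (ιA₂ × ιA₂) → ℂ :=
    fun p => ψ p.1 * maxEntVec ιA₂ p.2 with hv
  have eu : fqswMap (ιR := ιR) U Wᵀ * pureState ψ * (fqswMap (ιR := ιR) U Wᵀ)ᴴ = pureState u := by
    rw [pureState, pureState, hu, Matrix.mul_vecMulVec, Matrix.vecMulVec_mul, Matrix.star_mulVec]
  have ev : pureState ψ ⊗ₖ maxEntState ιA₂ = pureState v := by
    ext p q
    simp only [pureState, maxEntState, hv, Matrix.kroneckerMap_apply, Matrix.vecMulVec_apply,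
      Pi.star_apply, star_mul']
    ring
  have uval : ∀ r q a b, u ((r, q), (a, b)) = (fqX φ * W) (a, r) (q, b) := by
    intro r q a b
    simp only [hu, Matrix.mulVec, dotProduct, fqswMap, Matrix.of_apply, Matrix.mul_apply, fqX, hφ,
      fqAct, Matrix.transpose_apply]
    rw [Fintype.sum_prod_type, Finset.sum_eq_single r]
    · simp only [if_true]
      rw [Fintype.sum_prod_type]
      conv_rhs => rw [Fintype.sum_prod_type]
      simp only [Finset.sum_mul]
      rw [Finset.sum_comm]
      conv_rhs => rw [Finset.sum_comm]
      refine Finset.sum_congr rfl fun y _ => ?_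
      rw [Finset.sum_comm]
      refine Finset.sum_congr rfl fun a1 _ => Finset.sum_congr rfl fun x _ => ?_
      ring
    · intro s _ hs
      simp [Ne.symm hs]
    · simp
  have vval : ∀ r q a b, v ((r, q), (a, b)) = fqY ψ (a, r) (q, b) := fun _ _ _ _ => rfl
  have gen : ∀ (f g : (ιR × ((ιA₁ × ιA₂) × ιB)) × (ιA₂ × ιA₂) → ℂ)
      (F G : Matrix (ιA₂ × ιR) (((ιA₁ × ιA₂) × ιB) × ιA₂) ℂ),
      (∀ r q a b, f ((r, q), (a, b)) = F (a, r) (q, b)) →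
      (∀ r q a b, g ((r, q), (a, b)) = G (a, r) (q, b)) →
      star g ⬝ᵥ f = (Gᴴ * F).trace := by
    intro f g F G hf hg
    simp only [dotProduct, Matrix.trace, Matrix.diag_apply, Matrix.mul_apply, conjTranspose_apply,
      Pi.star_apply]
    rw [← Fintype.sum_prod_type']
    let e : ((ιR × ((ιA₁ × ιA₂) × ιB)) × (ιA₂ × ιA₂)) ≃
        ((((ιA₁ × ιA₂) × ιB) × ιA₂) × (ιA₂ × ιR)) :=
      { toFun := fun p => ((p.1.2, p.2.2), (p.2.1, p.1.1))
        invFun := fun p => ((p.2.2, p.1.1), (p.2.1, p.1.2))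
        left_inv := fun _ => rfl
        right_inv := fun _ => rfl }
    refine Fintype.sum_equiv e _ _ ?_
    rintro ⟨⟨r, q⟩, ⟨a, b⟩⟩
    rw [hf, hg]
    rfl
  have huu : star u ⬝ᵥ u = 1 := by
    rw [gen u u _ _ uval uval, Matrix.trace_mul_comm, Matrix.conjTranspose_mul, Matrix.mul_assoc,
      ← Matrix.mul_assoc W, hW, Matrix.one_mul, hX]
  have hvv : star v ⬝ᵥ v = 1 := by
    rw [gen v v _ _ vval vval, Matrix.trace_mul_comm, hY]
  have hvu : star v ⬝ᵥ u = ((fqY ψ)ᴴ * fqX φ * W).trace := by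
    rw [gen u v _ _ uval vval, Matrix.mul_assoc]
  rw [eu, ev]
  have hd := fq_pure_dist u v huu hvv
  have hre : (((fqY ψ)ᴴ * fqX φ * W).trace).re ≤ ‖star v ⬝ᵥ u‖ := by
    rw [hvu]; exact Complex.re_le_norm _
  have herm : ∀ {n : Type} [Fintype n] (M : Matrix n n ℂ), (∀ i j, star (M j i) = M i j) →
      0 ≤ purity M := fun M h => fq_purity_nonneg M (Matrix.ext h)
  have ha0 : 0 ≤ purity (redR ψ) := by
    refine herm _ fun i j => ?_
    simp only [redR, Matrix.of_apply, star_sum, star_mul', star_star]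
    exact Finset.sum_congr rfl fun _ _ => mul_comm _ _
  have hb0 : 0 ≤ purity (redAR ψ) := by
    refine herm _ fun i j => ?_
    simp only [redAR, Matrix.of_apply, star_sum, star_mul', star_star]
    exact Finset.sum_congr rfl fun _ _ => mul_comm _ _
  have hA0 : 0 ≤ purity (redA ψ) := by
    refine herm _ fun i j => ?_
    simp only [redA, Matrix.of_apply, star_sum, star_mul', star_star]
    exact Finset.sum_congr rfl fun _ _ => Finset.sum_congr rfl fun _ _ => mul_comm _ _
  have p1 : (0 : ℝ) < Fintype.card ιA₁ := by exact_mod_cast Fintype.card_pos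
  have p2 : (0 : ℝ) < Fintype.card ιA₂ := by exact_mod_cast Fintype.card_pos
  have pR : (0 : ℝ) < Fintype.card ιR := by exact_mod_cast Fintype.card_pos
  rw [Fintype.card_prod, Nat.cast_mul] at hWc
  exact fq_final_arith (norm_nonneg _) hd (by linarith) (hWc.trans hre) p1 p2 pR ha0 hb0 hA0
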